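/- arXiv:0801.0300 — 2 statements merged into one kernel-verified Lean document; each statement's English description precedes it below -/
import Mathlib

section
/- (Tractor form of the metrisability obstruction) Suppose the torsion-free connection ∇ on U (with parallel volume ε^{bc} and Schouten tensor P_{ab}) is projectively equivalent to a Levi–Civita connection on U. Define P_a := 5Y_a, Q_{ab} := 12Z_{ab}, R_c := 5Y_c, S_{ca} := 5∇_aY_c + 2Z_{ac}, T_{cab} := 5∇_{(a}∇_{b)}Y_c + 4∇_{(a}Z_{b)c} − 5P_{ab}Y_c − 15P_{c(a}Y_{b)}, U_{cd} := Z_{cd}, V_{cda} := ∇_aZ_{cd} − 5P_{a(c}Y_{d)}, and X_{cdab} := ∇_{(a}∇_{b)}Z_{cd} − 5(∇_{(a}P_{b)(c})Y_{d)} − 5P_{c(a}∇_{b)}Y_d − 5P_{d(a}∇_{b)}Y_c − P_{c(a}Z_{b)d} − P_{d(a}Z_{b)c} + 10Y_{(a}Y_{b)(cd)}. Then the determinant D(Γ) of the 6×6 matrix whose first row is (0, P₁, P₂, Q₁₁, Q₁₂, Q₂₂), whose rows 2–3 are (R_c, S_{c1}, S_{c2}, T_{c11}, T_{c12}, T_{c22})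 for c = 1, 2, and whose rows 4–6 are (U_{cd}, V_{cd1}, V_{cd2}, X_{cd11}, X_{cd12}, X_{cd22}) for (c,d) = (1,1), (1,2), (2,2), vanishes identically on U. -/
/-!
Suppose `∇` is projectively equivalent to the Levi–Civita connection of `g`. Rescaling the inverse
metric by a suitable power of `det g` (made a function by means of `ε`) gives a nowhere zero
solution `σ = ν g⁻¹` of the metrisability equation `∇_aσ^{bc} = δ_a^bμ^c + δ_a^cμ^b`, which is
linear and projectively invariant. Commuting derivatives of `σ` and then of `μ` closes it up:
`∇_aμ^b = δ_a^bρ − P_{ac}σ^{bc}` and `∇_aρ = 2Y_{acd}σ^{cd} − 2P_{ac}μ^c`. Commuting derivatives of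
`ρ` leaves the algebraic constraint `5Y_cμ^c + Z_{cd}σ^{cd} = 0`.

With the derivatives of `σ`, `μ`, `ρ` eliminated, the constraint, its covariant derivative and its
symmetrised second covariant derivative are six linear equations in the six numbers
`(ρ, μ^c, σ^{cd})`, whose coefficients are the columns of the tractor matrix. That matrix therefore
has a nonzero left null vector.
-/

noncomputable section

open Matrix

/-- Partial derivative in the first (x) variable. -/
def pdx (f : ℝ × ℝ → ℝ) : ℝ × ℝ → ℝ :=
  fun p => deriv (fun t => f (t, p.2)) p.1

/-- Partial derivative in the second (y) variable. -/
def pdy (f : ℝ × ℝ → ℝ) : ℝ × ℝ → ℝ :=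
  fun p => deriv (fun t => f (p.1, t)) p.2

/-- `pd 0 = ∂ₓ`, `pd 1 = ∂_y`. -/
def pd : Fin 2 → (ℝ × ℝ → ℝ) → (ℝ × ℝ → ℝ) := ![pdx, pdy]

/-- Covariant derivative `∇_a Y_c` of a one-form. -/
def covD1 (Γ : Fin 2 → Fin 2 → Fin 2 → ℝ × ℝ → ℝ) (Y : Fin 2 → ℝ × ℝ → ℝ) :
    Fin 2 → Fin 2 → ℝ × ℝ → ℝ := fun a c q =>
  pd a (Y c) q - ∑ e : Fin 2, Γ e a c q * Y e q

/-- Covariant derivative `∇_a P_{bc}` of a covariant 2-tensor. -/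
def covD2 (Γ : Fin 2 → Fin 2 → Fin 2 → ℝ × ℝ → ℝ) (P : Fin 2 → Fin 2 → ℝ × ℝ → ℝ) :
    Fin 2 → Fin 2 → Fin 2 → ℝ × ℝ → ℝ := fun a b c q =>
  pd a (P b c) q - ∑ e : Fin 2, Γ e a b q * P e c q - ∑ e : Fin 2, Γ e a c q * P b e q

/-- Covariant derivative `∇_a T_{bcd}` of a covariant 3-tensor. -/
def covD3 (Γ : Fin 2 → Fin 2 → Fin 2 → ℝ × ℝ → ℝ)
    (T : Fin 2 → Fin 2 → Fin 2 → ℝ × ℝ → ℝ) :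
    Fin 2 → Fin 2 → Fin 2 → Fin 2 → ℝ × ℝ → ℝ := fun a b c d q =>
  pd a (T b c d) q - ∑ e : Fin 2, Γ e a b q * T e c d q
    - ∑ e : Fin 2, Γ e a c q * T b e d q - ∑ e : Fin 2, Γ e a d q * T b c e q

/-- Curvature `Rᶜ_{abd}` of the torsion-free connection with symbols `Γᶜ_{ab}`. -/
def Rcurv (Γ : Fin 2 → Fin 2 → Fin 2 → ℝ × ℝ → ℝ) :
    Fin 2 → Fin 2 → Fin 2 → Fin 2 → ℝ × ℝ → ℝ := fun c a b d q =>
  pd a (Γ c b d) q - pd b (Γ c a d) q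
    + ∑ e : Fin 2, Γ c a e q * Γ e b d q - ∑ e : Fin 2, Γ c b e q * Γ e a d q

/-- The metric `g = E dx² + 2F dx dy + G dy²` as a matrix. -/
def gmat (E F G : ℝ × ℝ → ℝ) : ℝ × ℝ → Matrix (Fin 2) (Fin 2) ℝ := fun q =>
  !![E q, F q; F q, G q]

/-- Christoffel symbols `Γᶜ_{ab}` of the Levi–Civita connection of `g`. -/
def Christoffel (E F G : ℝ × ℝ → ℝ) (c a b : Fin 2) : ℝ × ℝ → ℝ := fun q =>
  (1/2) * ∑ d : Fin 2, ((gmat E F G q)⁻¹ c d) *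
    (pd a (fun r => gmat E F G r b d) q + pd b (fun r => gmat E F G r a d) q
      - pd d (fun r => gmat E F G r a b) q)

/-- `∇` (with symbols `Γ`) is projectively equivalent to a Levi–Civita connection on `U`:
there are a one-form `ω` and a nondegenerate metric `g` with
`Γᶜ_{ab} + δᶜ_aω_b + δᶜ_bω_a` the Christoffel symbols of `g`. -/
def ProjEquivLeviCivita (U : Set (ℝ × ℝ)) (Γ : Fin 2 → Fin 2 → Fin 2 → ℝ × ℝ → ℝ) : Prop :=
  ∃ ω : Fin 2 → ℝ × ℝ → ℝ, (∀ a, ContDiffOn ℝ (⊤ : ℕ∞) (ω a) U) ∧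
    ∃ E F G : ℝ × ℝ → ℝ,
      ContDiffOn ℝ (⊤ : ℕ∞) E U ∧ ContDiffOn ℝ (⊤ : ℕ∞) F U ∧ ContDiffOn ℝ (⊤ : ℕ∞) G U ∧
      (∀ q ∈ U, E q * G q - (F q) ^ 2 ≠ 0) ∧
      ∀ c a b : Fin 2, ∀ q ∈ U,
        Γ c a b q + (if c = a then ω b q else 0) + (if c = b then ω a q else 0)
          = Christoffel E F G c a b q

end

noncomputable section

variable (Γ : Fin 2 → Fin 2 → Fin 2 → ℝ × ℝ → ℝ)
variable (ε P : Fin 2 → Fin 2 → ℝ × ℝ → ℝ)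

/-- `Y_c := ε^{ab}∇_aP_{bc}`. -/
def Yform : Fin 2 → ℝ × ℝ → ℝ := fun c q =>
  ∑ a : Fin 2, ∑ b : Fin 2, ε a b q * covD2 Γ P a b c q

/-- `Y_{abc} := (1/2)(∇_aP_{bc} − ∇_bP_{ac})`, the Cotton tensor. -/
def Ytens : Fin 2 → Fin 2 → Fin 2 → ℝ × ℝ → ℝ := fun a b c q =>
  (1/2) * (covD2 Γ P a b c q - covD2 Γ P b a c q)

/-- `Z_{ab} := ∇_{(a}Y_{b)}`. -/
def Ztens : Fin 2 → Fin 2 → ℝ × ℝ → ℝ := fun a b q =>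
  (1/2) * (covD1 Γ (Yform Γ ε P) a b q + covD1 Γ (Yform Γ ε P) b a q)

/-- `∇_aY_c`. -/
def DY : Fin 2 → Fin 2 → ℝ × ℝ → ℝ := covD1 Γ (Yform Γ ε P)

/-- `∇_a∇_bY_c`. -/
def DDY : Fin 2 → Fin 2 → Fin 2 → ℝ × ℝ → ℝ := covD2 Γ (DY Γ ε P)

/-- `∇_aZ_{cd}`. -/
def DZ : Fin 2 → Fin 2 → Fin 2 → ℝ × ℝ → ℝ := covD2 Γ (Ztens Γ ε P)

/-- `∇_a∇_bZ_{cd}`. -/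
def DDZ : Fin 2 → Fin 2 → Fin 2 → Fin 2 → ℝ × ℝ → ℝ := covD3 Γ (DZ Γ ε P)

/-- `S_{ca} := 5∇_aY_c + 2Z_{ac}`. -/
def Stens : Fin 2 → Fin 2 → ℝ × ℝ → ℝ := fun c a q =>
  5 * DY Γ ε P a c q + 2 * Ztens Γ ε P a c q

/-- `T_{cab} := 5∇_{(a}∇_{b)}Y_c + 4∇_{(a}Z_{b)c} − 5P_{ab}Y_c − 15P_{c(a}Y_{b)}`. -/
def Ttens : Fin 2 → Fin 2 → Fin 2 → ℝ × ℝ → ℝ := fun c a b q =>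
  (5/2) * (DDY Γ ε P a b c q + DDY Γ ε P b a c q)
    + 2 * (DZ Γ ε P a b c q + DZ Γ ε P b a c q)
    - 5 * P a b q * Yform Γ ε P c q
    - (15/2) * (P c a q * Yform Γ ε P b q + P c b q * Yform Γ ε P a q)

/-- `V_{cda} := ∇_aZ_{cd} − 5P_{a(c}Y_{d)}`. -/
def Vtens : Fin 2 → Fin 2 → Fin 2 → ℝ × ℝ → ℝ := fun c d a q =>
  DZ Γ ε P a c d q
    - (5/2) * (P a c q * Yform Γ ε P d q + P a d q * Yform Γ ε P c q)

/-- `X_{cdab}` as in the statement. -/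
def Xtens : Fin 2 → Fin 2 → Fin 2 → Fin 2 → ℝ × ℝ → ℝ := fun c d a b q =>
  (1/2) * (DDZ Γ ε P a b c d q + DDZ Γ ε P b a c d q)
    - (5/4) * ((covD2 Γ P a b c q + covD2 Γ P b a c q) * Yform Γ ε P d q
        + (covD2 Γ P a b d q + covD2 Γ P b a d q) * Yform Γ ε P c q)
    - (5/2) * (P c a q * DY Γ ε P b d q + P c b q * DY Γ ε P a d q)
    - (5/2) * (P d a q * DY Γ ε P b c q + P d b q * DY Γ ε P a c q)
    - (1/2) * (P c a q * Ztens Γ ε P b d q + P c b q * Ztens Γ ε P a d q)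
    - (1/2) * (P d a q * Ztens Γ ε P b c q + P d b q * Ztens Γ ε P a c q)
    + 5 * (Yform Γ ε P a q * ((1/2) * (Ytens Γ P b c d q + Ytens Γ P b d c q))
        + Yform Γ ε P b q * ((1/2) * (Ytens Γ P a c d q + Ytens Γ P a d c q)))

/-- The tractor obstruction matrix. -/
def TractorMat : ℝ × ℝ → Matrix (Fin 6) (Fin 6) ℝ := fun q =>
  Matrix.of
  ![![0, 5 * Yform Γ ε P 0 q, 5 * Yform Γ ε P 1 q,
      12 * Ztens Γ ε P 0 0 q, 12 * Ztens Γ ε P 0 1 q, 12 * Ztens Γ ε P 1 1 q],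
    ![5 * Yform Γ ε P 0 q, Stens Γ ε P 0 0 q, Stens Γ ε P 0 1 q,
      Ttens Γ ε P 0 0 0 q, Ttens Γ ε P 0 0 1 q, Ttens Γ ε P 0 1 1 q],
    ![5 * Yform Γ ε P 1 q, Stens Γ ε P 1 0 q, Stens Γ ε P 1 1 q,
      Ttens Γ ε P 1 0 0 q, Ttens Γ ε P 1 0 1 q, Ttens Γ ε P 1 1 1 q],
    ![Ztens Γ ε P 0 0 q, Vtens Γ ε P 0 0 0 q, Vtens Γ ε P 0 0 1 q,
      Xtens Γ ε P 0 0 0 0 q, Xtens Γ ε P 0 0 0 1 q, Xtens Γ ε P 0 0 1 1 q],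
    ![Ztens Γ ε P 0 1 q, Vtens Γ ε P 0 1 0 q, Vtens Γ ε P 0 1 1 q,
      Xtens Γ ε P 0 1 0 0 q, Xtens Γ ε P 0 1 0 1 q, Xtens Γ ε P 0 1 1 1 q],
    ![Ztens Γ ε P 1 1 q, Vtens Γ ε P 1 1 0 q, Vtens Γ ε P 1 1 1 q,
      Xtens Γ ε P 1 1 0 0 q, Xtens Γ ε P 1 1 0 1 q, Xtens Γ ε P 1 1 1 1 q]]

end

open scoped Topology Matrix

/-! ### Partial derivatives in the plane -/

section PartialDerivatives

variable {U : Set (ℝ × ℝ)} {f g : ℝ × ℝ → ℝ} {q : ℝ × ℝ}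

lemma pd_eq_fderiv (a : Fin 2) (hf : DifferentiableAt ℝ f q) :
    pd a f q = fderiv ℝ f q (![(1, 0), (0, 1)] a) := by
  have horizontal : HasDerivAt (fun t : ℝ => (t, q.2)) (1, 0) q.1 :=
    (hasDerivAt_id q.1).prodMk (hasDerivAt_const q.1 q.2)
  have vertical : HasDerivAt (fun t : ℝ => (q.1, t)) (0, 1) q.2 :=
    (hasDerivAt_const q.2 q.1).prodMk (hasDerivAt_id q.2)
  fin_cases a
  · exact (hf.hasFDerivAt.comp_hasDerivAt (f := fun t : ℝ => (t, q.2)) q.1 horizontal).deriv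
  · exact (hf.hasFDerivAt.comp_hasDerivAt (f := fun t : ℝ => (q.1, t)) q.2 vertical).deriv

lemma pd_congr (a : Fin 2) (h : f =ᶠ[𝓝 q] g) : pd a f q = pd a g q := by
  have horizontal : Continuous fun t : ℝ => (t, q.2) := by fun_prop
  have vertical : Continuous fun t : ℝ => (q.1, t) := by fun_prop
  fin_cases a
  · exact Filter.EventuallyEq.deriv_eq ((horizontal.tendsto q.1).eventually h)
  · exact Filter.EventuallyEq.deriv_eq ((vertical.tendsto q.2).eventually h)

lemma pd_const (a : Fin 2) (c : ℝ) (q : ℝ × ℝ) : pd a (fun _ => c) q = 0 := by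
  rw [pd_eq_fderiv a (by fun_prop), fderiv_fun_const]
  rfl

lemma pd_add (a : Fin 2) (hf : DifferentiableAt ℝ f q) (hg : DifferentiableAt ℝ g q) :
    pd a (fun p => f p + g p) q = pd a f q + pd a g q := by
  rw [pd_eq_fderiv a hf, pd_eq_fderiv a hg, pd_eq_fderiv a (by fun_prop), fderiv_fun_add hf hg]
  rfl

lemma pd_sub (a : Fin 2) (hf : DifferentiableAt ℝ f q) (hg : DifferentiableAt ℝ g q) :
    pd a (fun p => f p - g p) q = pd a f q - pd a g q := by
  rw [pd_eq_fderiv a hf, pd_eq_fderiv a hg, pd_eq_fderiv a (by fun_prop), fderiv_fun_sub hf hg]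
  rfl

lemma pd_mul (a : Fin 2) (hf : DifferentiableAt ℝ f q) (hg : DifferentiableAt ℝ g q) :
    pd a (fun p => f p * g p) q = pd a f q * g q + f q * pd a g q := by
  rw [pd_eq_fderiv a hf, pd_eq_fderiv a hg, pd_eq_fderiv a (by fun_prop), fderiv_fun_mul hf hg,
    add_comm, mul_comm (fderiv ℝ f q _)]
  rfl

lemma pd_const_mul (a : Fin 2) (c : ℝ) (hf : DifferentiableAt ℝ f q) :
    pd a (fun p => c * f p) q = c * pd a f q := by
  rw [pd_mul a (by fun_prop) hf, pd_const, zero_mul, zero_add]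

lemma pd_comp {φ : ℝ → ℝ} {φ' : ℝ} (a : Fin 2) (hφ : HasDerivAt φ φ' (f q))
    (hf : DifferentiableAt ℝ f q) : pd a (fun p => φ (f p)) q = φ' * pd a f q := by
  have h : HasFDerivAt (fun p => φ (f p)) (φ' • fderiv ℝ f q) q :=
    hφ.comp_hasFDerivAt q hf.hasFDerivAt
  rw [pd_eq_fderiv a hf, pd_eq_fderiv a h.differentiableAt, h.fderiv]
  rfl

lemma differentiableAt_of_contDiffOn {n : WithTop ℕ∞} (hn : n ≠ 0) (hU : IsOpen U)
    (hf : ContDiffOn ℝ n f U) (hq : q ∈ U) : DifferentiableAt ℝ f q :=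
  (hf.contDiffAt (hU.mem_nhds hq)).differentiableAt hn

lemma contDiffOn_pd {m n : WithTop ℕ∞} (hU : IsOpen U) (hf : ContDiffOn ℝ n f U)
    (hmn : m + 1 ≤ n) (a : Fin 2) : ContDiffOn ℝ m (pd a f) U := by
  have hn : n ≠ 0 := by rintro rfl; simp at hmn
  exact ((hf.fderiv_of_isOpen hU hmn).clm_apply contDiffOn_const).congr fun p hp =>
    pd_eq_fderiv a (differentiableAt_of_contDiffOn hn hU hf hp)

lemma eventually_pd_eq_fderiv (a : Fin 2) (hf : ContDiffAt ℝ 1 f q) :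
    pd a f =ᶠ[𝓝 q] fun p => fderiv ℝ f p (![(1, 0), (0, 1)] a) := by
  filter_upwards [hf.eventually (by simp)] with p hp
  exact pd_eq_fderiv a (hp.differentiableAt one_ne_zero)

lemma differentiableAt_pd (a : Fin 2) (hf : ContDiffAt ℝ 2 f q) :
    DifferentiableAt ℝ (pd a f) q := by
  have hf' : DifferentiableAt ℝ (fderiv ℝ f) q :=
    (hf.fderiv_right (m := 1) (by norm_num)).differentiableAt one_ne_zero
  have h : DifferentiableAt ℝ (fun p => fderiv ℝ f p (![(1, 0), (0, 1)] a)) q := by fun_prop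
  exact h.congr_of_eventuallyEq (eventually_pd_eq_fderiv a (hf.of_le one_le_two))

lemma pd_comm (a b : Fin 2) (hf : ContDiffAt ℝ 2 f q) :
    pd a (pd b f) q = pd b (pd a f) q := by
  have hf' : DifferentiableAt ℝ (fderiv ℝ f) q :=
    (hf.fderiv_right (m := 1) (by norm_num)).differentiableAt one_ne_zero
  have second (a b : Fin 2) : pd a (pd b f) q =
      fderiv ℝ (fderiv ℝ f) q (![(1, 0), (0, 1)] a) (![(1, 0), (0, 1)] b) := by
    rw [pd_congr a (eventually_pd_eq_fderiv b (hf.of_le one_le_two)),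
      pd_eq_fderiv a (by fun_prop), fderiv_clm_apply hf' (by fun_prop)]
    simp
  rw [second, second]
  exact hf.isSymmSndFDerivAt (by simp) _ _

end PartialDerivatives

/-! ### Covariant derivatives -/

/-- The covariant derivative `∇_a v^b` of a vector field. The direction `a` comes first, so
`contraD1 Γ v a` is again a vector field, the derivative of `v` along the coordinate field `∂_a`. -/
noncomputable def contraD1 (Γ : Fin 2 → Fin 2 → Fin 2 → ℝ × ℝ → ℝ) (v : Fin 2 → ℝ × ℝ → ℝ) :
    Fin 2 → Fin 2 → ℝ × ℝ → ℝ := fun a b q =>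
  pd a (v b) q + ∑ e : Fin 2, Γ b a e q * v e q

/-- The covariant derivative `∇_a s^{bc}` of a contravariant 2-tensor. As for `contraD1`,
`contraD2 Γ s a` is its derivative along the coordinate field `∂_a`. -/
noncomputable def contraD2 (Γ : Fin 2 → Fin 2 → Fin 2 → ℝ × ℝ → ℝ)
    (s : Fin 2 → Fin 2 → ℝ × ℝ → ℝ) :
    Fin 2 → Fin 2 → Fin 2 → ℝ × ℝ → ℝ := fun a b c q =>
  pd a (s b c) q + ∑ e : Fin 2, Γ b a e q * s e c q + ∑ e : Fin 2, Γ c a e q * s b e q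

section CovariantDerivatives

variable {U : Set (ℝ × ℝ)} {Γ : Fin 2 → Fin 2 → Fin 2 → ℝ × ℝ → ℝ}
  {v w φ ψ : Fin 2 → ℝ × ℝ → ℝ} {s t T : Fin 2 → Fin 2 → ℝ × ℝ → ℝ} {f : ℝ × ℝ → ℝ} {q : ℝ × ℝ}

lemma contDiffOn_covD1 {m n : WithTop ℕ∞} (hU : IsOpen U) (hmn : m + 1 ≤ n)
    (hΓ : ∀ c a b, ContDiffOn ℝ m (Γ c a b) U) (hφ : ∀ c, ContDiffOn ℝ n (φ c) U) (a c : Fin 2) :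
    ContDiffOn ℝ m (covD1 Γ φ a c) U := by
  have hdφ := contDiffOn_pd hU (hφ c) hmn a
  have hφ' (c : Fin 2) : ContDiffOn ℝ m (φ c) U := (hφ c).of_le (le_self_add.trans hmn)
  unfold covD1
  fun_prop

lemma contDiffOn_covD2 {m n : WithTop ℕ∞} (hU : IsOpen U) (hmn : m + 1 ≤ n)
    (hΓ : ∀ c a b, ContDiffOn ℝ m (Γ c a b) U) (hT : ∀ b c, ContDiffOn ℝ n (T b c) U)
    (a b c : Fin 2) : ContDiffOn ℝ m (covD2 Γ T a b c) U := by
  have hdT := contDiffOn_pd hU (hT b c) hmn a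
  have hT' (b c : Fin 2) : ContDiffOn ℝ m (T b c) U := (hT b c).of_le (le_self_add.trans hmn)
  unfold covD2
  fun_prop

lemma contDiffOn_contraD1 {m n : WithTop ℕ∞} (hU : IsOpen U) (hmn : m + 1 ≤ n)
    (hΓ : ∀ c a b, ContDiffOn ℝ m (Γ c a b) U) (hv : ∀ b, ContDiffOn ℝ n (v b) U) (a b : Fin 2) :
    ContDiffOn ℝ m (contraD1 Γ v a b) U := by
  have hdv := contDiffOn_pd hU (hv b) hmn a
  have hv' (b : Fin 2) : ContDiffOn ℝ m (v b) U := (hv b).of_le (le_self_add.trans hmn)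
  unfold contraD1
  fun_prop

lemma covD1_congr (h : ∀ c, φ c =ᶠ[𝓝 q] ψ c) (a c : Fin 2) :
    covD1 Γ φ a c q = covD1 Γ ψ a c q := by
  simp only [covD1, pd_congr a (h c), (h _).eq_of_nhds]

lemma contraD1_congr (h : ∀ b, v b =ᶠ[𝓝 q] w b) (a b : Fin 2) :
    contraD1 Γ v a b q = contraD1 Γ w a b q := by
  simp only [contraD1, pd_congr a (h b), (h _).eq_of_nhds]

lemma contraD2_congr (h : ∀ b c, s b c =ᶠ[𝓝 q] t b c) (a b c : Fin 2) :
    contraD2 Γ s a b c q = contraD2 Γ t a b c q := by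
  simp only [contraD2, pd_congr a (h b c), (h _ _).eq_of_nhds]

lemma covD2_transpose (a b c : Fin 2) :
    covD2 Γ (fun b c => T c b) a b c q = covD2 Γ T a c b q := by
  simp only [covD2]
  ring

lemma covD3_transpose {V : Fin 2 → Fin 2 → Fin 2 → ℝ × ℝ → ℝ} (a b c d : Fin 2) :
    covD3 Γ (fun b c d => V b d c) a b c d q = covD3 Γ V a b d c q := by
  simp only [covD3]
  ring

/-- `covD1 Γ (T b)` treats `T_{bc}` with `b` fixed as a one-form in `c`, so it differs from
`∇_aT_{bc}` by the Christoffel term of the index `b`. -/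
lemma covD1_apply_eq_covD2_add (a b c : Fin 2) :
    covD1 Γ (T b) a c q = covD2 Γ T a b c q + ∑ e, Γ e a b q * T e c q := by
  simp only [covD1, covD2]
  ring

lemma contraD1_column_eq_contraD2_sub (a b c : Fin 2) :
    contraD1 Γ (fun b => s b c) a b q
      = contraD2 Γ s a b c q - ∑ e, Γ c a e q * s b e q := by
  simp only [contraD1, contraD2]
  ring

lemma two_mul_Ytens_eq (hΓsym : ∀ c a b, Γ c a b = Γ c b a) (a b c : Fin 2) :
    2 * Ytens Γ T a b c q = covD1 Γ (T b) a c q - covD1 Γ (T a) b c q := by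
  simp only [Ytens, covD1_apply_eq_covD2_add, hΓsym _ b a]
  ring

/-! ### Leibniz rules -/

lemma covD1_mul (hf : DifferentiableAt ℝ f q) (hφ : ∀ c, DifferentiableAt ℝ (φ c) q)
    (a c : Fin 2) :
    covD1 Γ (fun c p => f p * φ c p) a c q = pd a f q * φ c q + f q * covD1 Γ φ a c q := by
  simp only [covD1, pd_mul a hf (hφ c), Fin.sum_univ_two]
  ring

lemma covD1_add (hφ : ∀ c, DifferentiableAt ℝ (φ c) q) (hψ : ∀ c, DifferentiableAt ℝ (ψ c) q)
    (a c : Fin 2) :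
    covD1 Γ (fun c p => φ c p + ψ c p) a c q = covD1 Γ φ a c q + covD1 Γ ψ a c q := by
  simp only [covD1, pd_add a (hφ c) (hψ c), Fin.sum_univ_two]
  ring

lemma contraD1_sub (hv : ∀ b, DifferentiableAt ℝ (v b) q) (hw : ∀ b, DifferentiableAt ℝ (w b) q)
    (a b : Fin 2) :
    contraD1 Γ (fun b p => v b p - w b p) a b q = contraD1 Γ v a b q - contraD1 Γ w a b q := by
  simp only [contraD1, pd_sub a (hv b) (hw b), Fin.sum_univ_two]
  ring

lemma contraD1_const_mul (k : ℝ) (hv : ∀ b, DifferentiableAt ℝ (v b) q) (a b : Fin 2) :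
    contraD1 Γ (fun b p => k * v b p) a b q = k * contraD1 Γ v a b q := by
  simp only [contraD1, pd_const_mul a k (hv b), Fin.sum_univ_two]
  ring

lemma contraD2_mul (hf : DifferentiableAt ℝ f q) (hs : ∀ b c, DifferentiableAt ℝ (s b c) q)
    (a b c : Fin 2) :
    contraD2 Γ (fun b c p => f p * s b c p) a b c q
      = pd a f q * s b c q + f q * contraD2 Γ s a b c q := by
  simp only [contraD2, pd_mul a hf (hs b c), Fin.sum_univ_two]
  ring

lemma pd_sum_mul (hφ : ∀ c, DifferentiableAt ℝ (φ c) q) (hv : ∀ c, DifferentiableAt ℝ (v c) q)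
    (a : Fin 2) :
    pd a (fun p => ∑ c, φ c p * v c p) q
      = ∑ c, (covD1 Γ φ a c q * v c q + φ c q * contraD1 Γ v a c q) := by
  simp (disch := fun_prop) only [covD1, contraD1, Fin.sum_univ_two, pd_add, pd_mul]
  ring

lemma pd_sum_sum_mul (hT : ∀ b c, DifferentiableAt ℝ (T b c) q)
    (hs : ∀ b c, DifferentiableAt ℝ (s b c) q) (a : Fin 2) :
    pd a (fun p => ∑ b, ∑ c, T b c p * s b c p) q
      = ∑ b, ∑ c, (covD2 Γ T a b c q * s b c q + T b c q * contraD2 Γ s a b c q) := by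
  simp (disch := fun_prop) only [covD2, contraD2, Fin.sum_univ_two, pd_add, pd_mul]
  ring

lemma contraD1_sum_mul (hs : ∀ b c, DifferentiableAt ℝ (s b c) q)
    (hφ : ∀ c, DifferentiableAt ℝ (φ c) q) (a b : Fin 2) :
    contraD1 Γ (fun b p => ∑ c, s b c p * φ c p) a b q
      = ∑ c, (contraD2 Γ s a b c q * φ c q + s b c q * covD1 Γ φ a c q) := by
  simp (disch := fun_prop) only [covD1, contraD1, contraD2, Fin.sum_univ_two, pd_add, pd_mul]
  ring

lemma covD1_sum_mul (hT : ∀ b c, DifferentiableAt ℝ (T b c) q)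
    (hv : ∀ c, DifferentiableAt ℝ (v c) q) (a b : Fin 2) :
    covD1 Γ (fun b p => ∑ c, T b c p * v c p) a b q
      = ∑ c, (covD2 Γ T a b c q * v c q + T b c q * contraD1 Γ v a c q) := by
  simp (disch := fun_prop) only [covD1, covD2, contraD1, Fin.sum_univ_two, pd_add, pd_mul]
  ring

lemma covD1_sum_sum_mul {V : Fin 2 → Fin 2 → Fin 2 → ℝ × ℝ → ℝ}
    (hV : ∀ b c d, DifferentiableAt ℝ (V b c d) q) (hs : ∀ c d, DifferentiableAt ℝ (s c d) q)
    (a b : Fin 2) :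
    covD1 Γ (fun b p => ∑ c, ∑ d, V b c d p * s c d p) a b q
      = ∑ c, ∑ d, (covD3 Γ V a b c d q * s c d q + V b c d q * contraD2 Γ s a c d q) := by
  simp (disch := fun_prop) only [covD1, covD3, contraD2, Fin.sum_univ_two, pd_add, pd_mul]
  ring

/-! ### Ricci identities -/

lemma contraD1_comm (hΓ : ∀ c a b, DifferentiableAt ℝ (Γ c a b) q)
    (hv : ∀ c, ContDiffAt ℝ 2 (v c) q) (a b c : Fin 2) :
    contraD1 Γ (contraD1 Γ v b) a c q - contraD1 Γ (contraD1 Γ v a) b c q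
      = ∑ d, Rcurv Γ c a b d q * v d q := by
  have hv' (c : Fin 2) : DifferentiableAt ℝ (v c) q := (hv c).differentiableAt two_ne_zero
  have hdv (a c : Fin 2) : DifferentiableAt ℝ (fun p => pd a (v c) p) q :=
    differentiableAt_pd a (hv c)
  have pd_contraD1 (a b : Fin 2) : pd a (contraD1 Γ v b c) q = pd a (pd b (v c)) q
      + ∑ e, (pd a (Γ c b e) q * v e q + Γ c b e q * pd a (v e) q) := by
    unfold contraD1
    simp (disch := fun_prop) only [Fin.sum_univ_two, pd_add, pd_mul]
  rw [contraD1, contraD1, pd_contraD1, pd_contraD1, pd_comm a b (hv c)]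
  simp only [contraD1, Rcurv, Fin.sum_univ_two]
  ring

lemma contraD2_comm (hΓ : ∀ c a b, DifferentiableAt ℝ (Γ c a b) q)
    (hs : ∀ c d, ContDiffAt ℝ 2 (s c d) q) (a b c d : Fin 2) :
    contraD2 Γ (contraD2 Γ s b) a c d q - contraD2 Γ (contraD2 Γ s a) b c d q
      = ∑ e, (Rcurv Γ c a b e q * s e d q + Rcurv Γ d a b e q * s c e q) := by
  have hs' (c d : Fin 2) : DifferentiableAt ℝ (s c d) q := (hs c d).differentiableAt two_ne_zero
  have hds (a c d : Fin 2) : DifferentiableAt ℝ (fun p => pd a (s c d) p) q :=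
    differentiableAt_pd a (hs c d)
  have pd_contraD2 (a b : Fin 2) : pd a (contraD2 Γ s b c d) q = pd a (pd b (s c d)) q
      + ∑ e, (pd a (Γ c b e) q * s e d q + Γ c b e q * pd a (s e d) q)
      + ∑ e, (pd a (Γ d b e) q * s c e q + Γ d b e q * pd a (s c e) q) := by
    unfold contraD2
    simp (disch := fun_prop) only [Fin.sum_univ_two, pd_add, pd_mul]
  rw [contraD2, contraD2, pd_contraD2, pd_contraD2, pd_comm a b (hs c d)]
  simp only [contraD2, Rcurv, Fin.sum_univ_two]
  ring

end CovariantDerivatives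

/-! ### The Levi–Civita connection -/

section LeviCivita

variable {E F G : ℝ × ℝ → ℝ} {q : ℝ × ℝ}

lemma det_gmat (E F G : ℝ × ℝ → ℝ) (q : ℝ × ℝ) :
    (gmat E F G q).det = E q * G q - F q ^ 2 := by
  rw [gmat, Matrix.det_fin_two_of, sq]

lemma gmat_isSymm (E F G : ℝ × ℝ → ℝ) (q : ℝ × ℝ) : (gmat E F G q).IsSymm := by
  ext a b
  fin_cases a <;> fin_cases b <;> rfl

lemma sum_gmat_mul_Christoffel (hg : (gmat E F G q).det ≠ 0) (a b e : Fin 2) :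
    ∑ c, gmat E F G q e c * Christoffel E F G c a b q
      = 1 / 2 * (pd a (fun p => gmat E F G p b e) q + pd b (fun p => gmat E F G p a e) q
        - pd e (fun p => gmat E F G p a b) q) := by
  set k : Fin 2 → ℝ := fun d => pd a (fun p => gmat E F G p b d) q
    + pd b (fun p => gmat E F G p a d) q - pd d (fun p => gmat E F G p a b) q with hk
  have cancel : gmat E F G q *ᵥ ((gmat E F G q)⁻¹ *ᵥ k) = k := by
    rw [Matrix.mulVec_mulVec, Matrix.mul_nonsing_inv _ hg.isUnit, Matrix.one_mulVec]
  calc ∑ c, gmat E F G q e c * Christoffel E F G c a b q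
      = 1 / 2 * (gmat E F G q *ᵥ ((gmat E F G q)⁻¹ *ᵥ k)) e := by
        simp only [Christoffel, hk, Matrix.mulVec, dotProduct, Finset.mul_sum]
        exact Finset.sum_congr rfl fun c _ => Finset.sum_congr rfl fun d _ => by ring
    _ = 1 / 2 * k e := by rw [cancel]

lemma covD2_Christoffel_gmat (hg : (gmat E F G q).det ≠ 0) (a b c : Fin 2) :
    covD2 (Christoffel E F G) (fun b c p => gmat E F G p b c) a b c q = 0 := by
  have symm (p : ℝ × ℝ) (b c : Fin 2) : gmat E F G p b c = gmat E F G p c b :=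
    (gmat_isSymm E F G p).apply c b
  have lower_b : ∑ e, Christoffel E F G e a b q * gmat E F G q e c = _ :=
    Eq.trans (Finset.sum_congr rfl fun e _ => by rw [mul_comm, symm q e c])
      (sum_gmat_mul_Christoffel hg a b c)
  have lower_c : ∑ e, Christoffel E F G e a c q * gmat E F G q b e = _ :=
    Eq.trans (Finset.sum_congr rfl fun e _ => mul_comm _ _) (sum_gmat_mul_Christoffel hg a c b)
  rw [covD2, lower_b, lower_c]
  simp only [symm _ c b]
  ring

end LeviCivita

section ProjectiveChange

variable {Γ Γ' : Fin 2 → Fin 2 → Fin 2 → ℝ × ℝ → ℝ}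
  {g h s : Fin 2 → Fin 2 → ℝ × ℝ → ℝ} {ω : Fin 2 → ℝ × ℝ → ℝ} {q : ℝ × ℝ}

lemma contraD2_inverse_eq_zero (hg : ∀ b c, DifferentiableAt ℝ (g b c) q)
    (hh : ∀ b c, DifferentiableAt ℝ (h b c) q)
    (hgh : ∀ᶠ p in 𝓝 q, (Matrix.of fun b c => g b c p) * (Matrix.of fun b c => h b c p) = 1)
    {a : Fin 2} (hpar : ∀ b c, covD2 Γ g a b c q = 0) (b c : Fin 2) :
    contraD2 Γ h a b c q = 0 := by
  have inverse : (Matrix.of fun b c => g b c q) * (Matrix.of fun b c => h b c q) = 1 :=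
    hgh.self_of_nhds
  have inverse' := mul_eq_one_comm.1 inverse
  have right (b c : Fin 2) : ∑ d, g b d q * h d c q = (1 : Matrix (Fin 2) (Fin 2) ℝ) b c :=
    congrFun₂ inverse b c
  have left (b c : Fin 2) : ∑ d, h b d q * g d c q = (1 : Matrix (Fin 2) (Fin 2) ℝ) b c :=
    congrFun₂ inverse' b c
  have leibniz (b c : Fin 2) : ∑ d, g b d q * contraD2 Γ h a d c q = 0 := by
    have derivative : pd a (fun p => ∑ d, g b d p * h d c p) q = 0 :=
      (pd_congr a (hgh.mono fun p hp => congrFun₂ hp b c)).trans (pd_const a _ q)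
    rw [pd_sum_mul (Γ := Γ) (hg b) fun d => hh d c] at derivative
    simp only [covD1_apply_eq_covD2_add (T := g), contraD1_column_eq_contraD2_sub, hpar, zero_add]
      at derivative
    have contract : ∑ e, Γ e a b q * ∑ d, g e d q * h d c q
        = ∑ e, Γ c a e q * ∑ d, g b d q * h d e q := by
      simp [right, Matrix.one_apply]
    simp only [Fin.sum_univ_two] at derivative contract ⊢
    linear_combination derivative - contract
  calc contraD2 Γ h a b c q = ∑ d, (∑ e, h b e q * g e d q) * contraD2 Γ h a d c q := by
        simp [left, Matrix.one_apply]
    _ = ∑ e, h b e q * ∑ d, g e d q * contraD2 Γ h a d c q := by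
        simp only [Fin.sum_univ_two]
        ring
    _ = 0 := by simp only [leibniz, mul_zero, Finset.sum_const_zero]

lemma contraD2_projectiveChange
    (hΓ' : ∀ c a b, Γ c a b q + (if c = a then ω b q else 0) + (if c = b then ω a q else 0)
      = Γ' c a b q) (a b c : Fin 2) :
    contraD2 Γ' s a b c q = contraD2 Γ s a b c q + 2 * ω a q * s b c q
      + (if a = b then ∑ e, ω e q * s e c q else 0)
      + (if a = c then ∑ e, ω e q * s b e q else 0) := by
  simp only [contraD2, ← hΓ', Fin.sum_univ_two]
  fin_cases a <;> fin_cases b <;> fin_cases c <;> simp <;> ring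

lemma pd_det_of_covD2_eq_zero (hg : ∀ b c, DifferentiableAt ℝ (g b c) q) {a : Fin 2}
    (hpar : ∀ b c, covD2 Γ g a b c q = 0) :
    pd a (fun p => (Matrix.of fun b c => g b c p).det) q
      = 2 * (∑ c, Γ c a c q) * (Matrix.of fun b c => g b c q).det := by
  simp only [covD2, Fin.sum_univ_two] at hpar
  simp only [Matrix.det_fin_two, Matrix.of_apply]
  simp (disch := fun_prop) only [pd_sub, pd_mul, Fin.sum_univ_two]
  linear_combination g 1 1 q * hpar 0 0 + g 0 0 q * hpar 1 1 - g 1 0 q * hpar 0 1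
    - g 0 1 q * hpar 1 0

lemma pd_of_contraD2_eq_zero_of_skew {ε : Fin 2 → Fin 2 → ℝ × ℝ → ℝ}
    (hskew : ∀ a b, ε a b q = -ε b a q) {a : Fin 2} (hpar : contraD2 Γ ε a 0 1 q = 0) :
    pd a (ε 0 1) q = -(∑ c, Γ c a c q) * ε 0 1 q := by
  have diag (b : Fin 2) : ε b b q = 0 := by linarith [hskew b b]
  simp only [contraD2, Fin.sum_univ_two, diag] at hpar
  rw [Fin.sum_univ_two]
  linear_combination hpar

end ProjectiveChange

/-! ### The metrisability equation -/

/-- The standing data: a torsion-free connection on the open set `U` together with a parallel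
nowhere vanishing skew bivector `ε` and a symmetric Schouten tensor `P`. -/
structure EquiaffineData (U : Set (ℝ × ℝ)) (Γ : Fin 2 → Fin 2 → Fin 2 → ℝ × ℝ → ℝ)
    (ε P : Fin 2 → Fin 2 → ℝ × ℝ → ℝ) : Prop where
  isOpen : IsOpen U
  Γ_symm : ∀ c a b, Γ c a b = Γ c b a
  Γ_smooth : ∀ c a b, ContDiffOn ℝ (⊤ : ℕ∞) (Γ c a b) U
  ε_skew : ∀ a b q, ε a b q = -ε b a q
  ε_ne_zero : ∀ q ∈ U, ε 0 1 q ≠ 0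
  ε_smooth : ∀ a b, ContDiffOn ℝ (⊤ : ℕ∞) (ε a b) U
  ε_parallel : ∀ a b c, ∀ q ∈ U, contraD2 Γ ε a b c q = 0
  P_symm : ∀ a b, P a b = P b a
  P_smooth : ∀ a b, ContDiffOn ℝ (⊤ : ℕ∞) (P a b) U
  schouten : ∀ c a b d, ∀ q ∈ U, Rcurv Γ c a b d q
    = (if c = a then P b d q else 0) - (if c = b then P a d q else 0)

/-- The linear metrisability equation `∇_aσ^{bc} = δ_a^bμ^c + δ_a^cμ^b` for a symmetric `σ`. -/
structure MetrisabilitySolution (U : Set (ℝ × ℝ)) (Γ : Fin 2 → Fin 2 → Fin 2 → ℝ × ℝ → ℝ)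
    (σ : Fin 2 → Fin 2 → ℝ × ℝ → ℝ) (μ : Fin 2 → ℝ × ℝ → ℝ) : Prop where
  σ_smooth : ∀ b c, ContDiffOn ℝ (⊤ : ℕ∞) (σ b c) U
  μ_smooth : ∀ b, ContDiffOn ℝ (⊤ : ℕ∞) (μ b) U
  σ_symm : ∀ b c, σ b c = σ c b
  contraD2_σ : ∀ a b c, ∀ q ∈ U, contraD2 Γ σ a b c q
    = (if a = b then μ c q else 0) + (if a = c then μ b q else 0)

section Metrisability

variable {U : Set (ℝ × ℝ)} {Γ : Fin 2 → Fin 2 → Fin 2 → ℝ × ℝ → ℝ}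
  {ε P : Fin 2 → Fin 2 → ℝ × ℝ → ℝ} {E F G : ℝ × ℝ → ℝ}

lemma EquiaffineData.contDiffAt_two {f : ℝ × ℝ → ℝ} {q : ℝ × ℝ} (hD : EquiaffineData U Γ ε P)
    (hf : ContDiffOn ℝ (⊤ : ℕ∞) f U) (hq : q ∈ U) : ContDiffAt ℝ 2 f q :=
  (hf.contDiffAt (hD.isOpen.mem_nhds hq)).of_le ENat.LEInfty.out

lemma EquiaffineData.differentiableAt {f : ℝ × ℝ → ℝ} {q : ℝ × ℝ} (hD : EquiaffineData U Γ ε P)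
    (hf : ContDiffOn ℝ (⊤ : ℕ∞) f U) (hq : q ∈ U) : DifferentiableAt ℝ f q :=
  (hD.contDiffAt_two hf hq).differentiableAt two_ne_zero

lemma contDiffOn_gmat {n : WithTop ℕ∞} (hE : ContDiffOn ℝ n E U) (hF : ContDiffOn ℝ n F U)
    (hG : ContDiffOn ℝ n G U) (b c : Fin 2) : ContDiffOn ℝ n (fun p => gmat E F G p b c) U := by
  fin_cases b <;> fin_cases c
  exacts [hE, hF, hF, hG]

lemma contDiffOn_inv_gmat {n : WithTop ℕ∞} (hE : ContDiffOn ℝ n E U) (hF : ContDiffOn ℝ n F U)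
    (hG : ContDiffOn ℝ n G U) (hdet : ∀ q ∈ U, (gmat E F G q).det ≠ 0) (b c : Fin 2) :
    ContDiffOn ℝ n (fun p => (gmat E F G p)⁻¹ b c) U := by
  have hdet' : ContDiffOn ℝ n (fun p => (gmat E F G p).det) U := by
    simp only [det_gmat]
    fun_prop
  have hadj : ContDiffOn ℝ n (fun p => (gmat E F G p).adjugate b c) U := by
    simp only [gmat, Matrix.adjugate_fin_two_of]
    fin_cases b <;> fin_cases c
    exacts [hG, hF.neg, hF.neg, hE]
  simp only [Matrix.inv_def, Ring.inverse_eq_inv', Matrix.smul_apply, smul_eq_mul]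
  exact (hdet'.inv hdet).mul hadj

/-- `ν = |δ| ^ k`, written with the logarithm since `Real.log δ` is `log |δ|` for either sign. -/
lemma exists_pd_eq_const_mul {δ : ℝ × ℝ → ℝ} {β : Fin 2 → ℝ × ℝ → ℝ} (hU : IsOpen U)
    (hδ : ContDiffOn ℝ (⊤ : ℕ∞) δ U) (hδne : ∀ q ∈ U, δ q ≠ 0)
    (hβ : ∀ a, ∀ q ∈ U, pd a δ q = β a q * δ q) (k : ℝ) :
    ∃ ν : ℝ × ℝ → ℝ, ContDiffOn ℝ (⊤ : ℕ∞) ν U ∧ (∀ q, ν q ≠ 0) ∧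
      ∀ a, ∀ q ∈ U, pd a ν q = k * β a q * ν q := by
  refine ⟨fun q => Real.exp (k * Real.log (δ q)),
    (contDiffOn_const.mul (hδ.log hδne)).exp, fun q => Real.exp_ne_zero _, fun a q hq => ?_⟩
  have power : HasDerivAt (fun t => Real.exp (k * Real.log t))
      (Real.exp (k * Real.log (δ q)) * (k * (δ q)⁻¹)) (δ q) :=
    ((Real.hasDerivAt_log (hδne q hq)).const_mul k).exp
  rw [pd_comp a power (differentiableAt_of_contDiffOn (by simp) hU hδ hq), hβ a q hq]
  field_simp [hδne q hq]

lemma contraD2_Christoffel_inv_gmat (hU : IsOpen U) (hE : ContDiffOn ℝ 1 E U)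
    (hF : ContDiffOn ℝ 1 F U) (hG : ContDiffOn ℝ 1 G U) (hdet : ∀ q ∈ U, (gmat E F G q).det ≠ 0)
    (a b c : Fin 2) {q : ℝ × ℝ} (hq : q ∈ U) :
    contraD2 (Christoffel E F G) (fun b c p => (gmat E F G p)⁻¹ b c) a b c q = 0 := by
  have differentiable {f : ℝ × ℝ → ℝ} (hf : ContDiffOn ℝ 1 f U) : DifferentiableAt ℝ f q :=
    differentiableAt_of_contDiffOn one_ne_zero hU hf hq
  refine contraD2_inverse_eq_zero (g := fun b c p => gmat E F G p b c)
    (fun b c => differentiable (contDiffOn_gmat hE hF hG b c))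
    (fun b c => differentiable (contDiffOn_inv_gmat hE hF hG hdet b c)) ?_
    (covD2_Christoffel_gmat (hdet q hq) a) b c
  filter_upwards [hU.mem_nhds hq] with p hp
  exact Matrix.mul_nonsing_inv _ (hdet p hp).isUnit

lemma EquiaffineData.pd_det_mul_sq (hD : EquiaffineData U Γ ε P) {ω : Fin 2 → ℝ × ℝ → ℝ}
    (hE : ContDiffOn ℝ 1 E U) (hF : ContDiffOn ℝ 1 F U) (hG : ContDiffOn ℝ 1 G U)
    {q : ℝ × ℝ} (hq : q ∈ U) (hdet : (gmat E F G q).det ≠ 0)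
    (hΓ : ∀ c a b, Γ c a b q + (if c = a then ω b q else 0) + (if c = b then ω a q else 0)
      = Christoffel E F G c a b q) (a : Fin 2) :
    pd a (fun p => (gmat E F G p).det * ε 0 1 p ^ 2) q
      = 6 * ω a q * ((gmat E F G q).det * ε 0 1 q ^ 2) := by
  have hg (b c : Fin 2) : ContDiffAt ℝ 1 (fun p => gmat E F G p b c) q :=
    (contDiffOn_gmat hE hF hG b c).contDiffAt (hD.isOpen.mem_nhds hq)
  have hdet' : DifferentiableAt ℝ (fun p => (gmat E F G p).det) q := by
    simp only [Matrix.det_fin_two]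
    exact (((hg 0 0).mul (hg 1 1)).sub ((hg 0 1).mul (hg 1 0))).differentiableAt one_ne_zero
  have hε := hD.differentiableAt (hD.ε_smooth 0 1) hq
  have trace : ∑ c, Christoffel E F G c a c q = (∑ c, Γ c a c q) + 3 * ω a q := by
    simp only [← hΓ, Finset.sum_add_distrib, Finset.sum_ite_eq', Finset.mem_univ, if_true,
      Finset.sum_const, Finset.card_univ, Fintype.card_fin, nsmul_eq_mul, Nat.cast_ofNat]
    ring
  have pd_det : pd a (fun p => (gmat E F G p).det) q
      = 2 * (∑ c, Christoffel E F G c a c q) * (gmat E F G q).det :=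
    pd_det_of_covD2_eq_zero (fun b c => (hg b c).differentiableAt one_ne_zero)
      (covD2_Christoffel_gmat hdet a)
  have pd_ε := pd_of_contraD2_eq_zero_of_skew (fun a b => hD.ε_skew a b q)
    (hD.ε_parallel a 0 1 q hq)
  simp only [sq]
  rw [pd_mul a hdet' (by fun_prop), pd_mul a hε hε, pd_det, pd_ε, trace]
  ring

lemma MetrisabilitySolution.of_projectiveChange {Γ' : Fin 2 → Fin 2 → Fin 2 → ℝ × ℝ → ℝ}
    {h : Fin 2 → Fin 2 → ℝ × ℝ → ℝ} {ω : Fin 2 → ℝ × ℝ → ℝ} {ν : ℝ × ℝ → ℝ} (hU : IsOpen U)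
    (hh : ∀ b c, ContDiffOn ℝ (⊤ : ℕ∞) (h b c) U) (hω : ∀ a, ContDiffOn ℝ (⊤ : ℕ∞) (ω a) U)
    (hν : ContDiffOn ℝ (⊤ : ℕ∞) ν U) (hsymm : ∀ b c, h b c = h c b)
    (hΓ : ∀ c a b, ∀ q ∈ U, Γ c a b q + (if c = a then ω b q else 0)
      + (if c = b then ω a q else 0) = Γ' c a b q)
    (hpar : ∀ a b c, ∀ q ∈ U, contraD2 Γ' h a b c q = 0)
    (hpd : ∀ a, ∀ q ∈ U, pd a ν q = 2 * ω a q * ν q) :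
    MetrisabilitySolution U Γ (fun b c p => ν p * h b c p)
      (fun c p => -(ν p * ∑ e, ω e p * h e c p)) where
  σ_smooth b c := hν.mul (hh b c)
  μ_smooth c := by fun_prop
  σ_symm b c := by rw [hsymm]
  contraD2_σ a b c q hq := by
    have differentiable {f : ℝ × ℝ → ℝ} (hf : ContDiffOn ℝ (⊤ : ℕ∞) f U) :
        DifferentiableAt ℝ f q := differentiableAt_of_contDiffOn (by simp) hU hf hq
    have change := contraD2_projectiveChange (s := h) (fun c a b => hΓ c a b q hq) a b c
    rw [hpar a b c q hq] at change
    rw [contraD2_mul (differentiable hν) (fun b c => differentiable (hh b c)), hpd a q hq]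
    simp only [hsymm b] at change ⊢
    split_ifs at change ⊢ <;> linear_combination -ν q * change

theorem EquiaffineData.exists_metrisabilitySolution (hD : EquiaffineData U Γ ε P)
    (hmet : ProjEquivLeviCivita U Γ) :
    ∃ σ μ, MetrisabilitySolution U Γ σ μ ∧ ∀ q ∈ U, ∃ b c, σ b c q ≠ 0 := by
  obtain ⟨ω, hω, E, F, G, hE, hF, hG, hdet, hΓ⟩ := hmet
  simp only [← det_gmat] at hdet
  have weight_smooth : ContDiffOn ℝ (⊤ : ℕ∞) (fun p => (gmat E F G p).det * ε 0 1 p ^ 2) U := by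
    have := hD.ε_smooth 0 1
    simp only [det_gmat]
    fun_prop
  obtain ⟨ν, hν, hνne, pd_ν⟩ := exists_pd_eq_const_mul hD.isOpen weight_smooth
    (fun q hq => mul_ne_zero (hdet q hq) (pow_ne_zero 2 (hD.ε_ne_zero q hq)))
    (fun a q hq => hD.pd_det_mul_sq (hE.of_le (by simp)) (hF.of_le (by simp))
      (hG.of_le (by simp)) hq (hdet q hq) (fun c a b => hΓ c a b q hq) a) (1 / 3)
  refine ⟨_, _, MetrisabilitySolution.of_projectiveChange hD.isOpen
    (contDiffOn_inv_gmat hE hF hG hdet) hω hν ?_ hΓ (fun a b c q hq =>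
      contraD2_Christoffel_inv_gmat hD.isOpen (hE.of_le (by simp)) (hF.of_le (by simp))
        (hG.of_le (by simp)) hdet a b c hq) ?_, ?_⟩
  · exact fun b c => funext fun p => (gmat_isSymm E F G p).inv.apply c b
  · exact fun a q hq => by rw [pd_ν a q hq]; ring
  · intro q hq
    by_contra! vanish
    have inv_eq_zero : (gmat E F G q)⁻¹ = 0 :=
      Matrix.ext fun b c => (mul_eq_zero.1 (vanish b c)).resolve_left (hνne q)
    have unit := Matrix.mul_nonsing_inv _ (hdet q hq).isUnit
    rw [inv_eq_zero, mul_zero] at unit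
    exact zero_ne_one unit

end Metrisability

/-! ### Prolongation -/

/-- A solution of the metrisability equation together with the function `ρ` closing up its
first prolongation, `∇_aμ^b = δ_a^bρ − P_{ac}σ^{bc}`. -/
structure ProlongedSolution (U : Set (ℝ × ℝ)) (Γ : Fin 2 → Fin 2 → Fin 2 → ℝ × ℝ → ℝ)
    (P σ : Fin 2 → Fin 2 → ℝ × ℝ → ℝ) (μ : Fin 2 → ℝ × ℝ → ℝ) (ρ : ℝ × ℝ → ℝ) : Prop
    extends MetrisabilitySolution U Γ σ μ where
  ρ_smooth : ContDiffOn ℝ (⊤ : ℕ∞) ρ U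
  contraD1_μ : ∀ a b, ∀ q ∈ U,
    contraD1 Γ μ a b q = (if a = b then ρ q else 0) - ∑ c, σ b c q * P a c q

section Prolongation

variable {U : Set (ℝ × ℝ)} {Γ : Fin 2 → Fin 2 → Fin 2 → ℝ × ℝ → ℝ}
  {ε P σ : Fin 2 → Fin 2 → ℝ × ℝ → ℝ} {μ v : Fin 2 → ℝ × ℝ → ℝ} {ρ f : ℝ × ℝ → ℝ} {q : ℝ × ℝ}

lemma card_mul_eq_ite_trace {n R : Type*} [Fintype n] [DecidableEq n] [CommRing R]
    {M : Matrix n n R}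
    (h : ∀ a b c d, (if b = c then M a d else 0) + (if b = d then M a c else 0)
      = (if a = c then M b d else 0) + (if a = d then M b c else 0)) (a d : n) :
    (Fintype.card n : R) * M a d = if a = d then M.trace else 0 := by
  have contracted := Finset.sum_congr rfl fun b (_ : b ∈ Finset.univ) => h a b b d
  simpa [Finset.sum_add_distrib, Finset.sum_ite_irrel, Matrix.trace, add_comm] using contracted

lemma contraD1_ite (a b c : Fin 2) :
    contraD1 Γ (fun c p => if b = c then f p else 0) a c q
      = (if b = c then pd a f q else 0) + Γ c a b q * f q := by
  fin_cases b <;> fin_cases c <;> simp [contraD1, pd_const]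

lemma contraD2_ite_add_ite (a b c d : Fin 2) (hv : ∀ c, DifferentiableAt ℝ (v c) q) :
    contraD2 Γ (fun c d p => (if b = c then v d p else 0) + (if b = d then v c p else 0)) a c d q
      = (if b = c then contraD1 Γ v a d q else 0) + (if b = d then contraD1 Γ v a c q else 0)
        + Γ c a b q * v d q + Γ d a b q * v c q := by
  simp only [contraD2, contraD1]
  fin_cases b <;> fin_cases c <;> fin_cases d <;>
    simp (disch := fun_prop) [pd_const, pd_add] <;> ring

lemma MetrisabilitySolution.contraD1_add_sum_symm (hD : EquiaffineData U Γ ε P)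
    (hσ : MetrisabilitySolution U Γ σ μ) (hq : q ∈ U) (a b c d : Fin 2) :
    (if b = c then contraD1 Γ μ a d q + ∑ e, σ d e q * P a e q else 0)
        + (if b = d then contraD1 Γ μ a c q + ∑ e, σ c e q * P a e q else 0)
      = (if a = c then contraD1 Γ μ b d q + ∑ e, σ d e q * P b e q else 0)
        + (if a = d then contraD1 Γ μ b c q + ∑ e, σ c e q * P b e q else 0) := by
  have hμ (c : Fin 2) := hD.differentiableAt (hσ.μ_smooth c) hq
  have second (a b : Fin 2) : contraD2 Γ (contraD2 Γ σ b) a c d q = _ :=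
    (contraD2_congr (fun c d => Filter.eventually_of_mem (hD.isOpen.mem_nhds hq) fun p hp =>
      hσ.contraD2_σ b c d p hp) a c d).trans (contraD2_ite_add_ite a b c d hμ)
  have ricci := contraD2_comm (fun c a b => hD.differentiableAt (hD.Γ_smooth c a b) hq)
    (fun c d => hD.contDiffAt_two (hσ.σ_smooth c d) hq) a b c d
  simp only [second, hD.schouten _ _ _ _ q hq, hD.Γ_symm _ b a, hσ.σ_symm _ d, @eq_comm _ c a,
    @eq_comm _ c b, @eq_comm _ d a, @eq_comm _ d b,
    Fin.sum_univ_two] at ricci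
  simp only [Fin.sum_univ_two]
  split_ifs at ricci ⊢ <;> linear_combination ricci

theorem MetrisabilitySolution.exists_prolongedSolution (hD : EquiaffineData U Γ ε P)
    (hσ : MetrisabilitySolution U Γ σ μ) : ∃ ρ, ProlongedSolution U Γ P σ μ ρ := by
  let M (p : ℝ × ℝ) : Matrix (Fin 2) (Fin 2) ℝ :=
    .of fun a b => contraD1 Γ μ a b p + ∑ c, σ b c p * P a c p
  refine ⟨fun p => 1 / 2 * (M p).trace, { hσ with ρ_smooth := ?_, contraD1_μ := ?_ }⟩
  · have hdμ := contDiffOn_contraD1 (m := (⊤ : ℕ∞)) hD.isOpen (by simp) hD.Γ_smooth hσ.μ_smooth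
    have := hσ.σ_smooth
    have := hD.P_smooth
    simp only [M, Matrix.trace, Matrix.diag, Matrix.of_apply]
    fun_prop
  · intro a b q hq
    have scalar := card_mul_eq_ite_trace (M := M q) (hσ.contraD1_add_sum_symm hD hq) a b
    simp only [Fintype.card_fin, Nat.cast_ofNat, M, Matrix.of_apply] at scalar ⊢
    split_ifs at scalar ⊢ <;> linear_combination scalar / 2

lemma ProlongedSolution.contraD1_contraD1_μ (hD : EquiaffineData U Γ ε P)
    (hρ : ProlongedSolution U Γ P σ μ ρ) (hq : q ∈ U) (a b c : Fin 2) :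
    contraD1 Γ (contraD1 Γ μ b) a c q
      = (if b = c then pd a ρ q else 0) + Γ c a b q * ρ q
        - ∑ d, (contraD2 Γ σ a c d q * P b d q + σ c d q * covD1 Γ (P b) a d q) := by
  have hσ (c d : Fin 2) := hD.differentiableAt (hρ.σ_smooth c d) hq
  have hP (b d : Fin 2) := hD.differentiableAt (hD.P_smooth b d) hq
  have hρ' (c : Fin 2) : DifferentiableAt ℝ (fun p => if b = c then ρ p else 0) q := by
    split_ifs
    exacts [hD.differentiableAt hρ.ρ_smooth hq, differentiableAt_const 0]
  calc contraD1 Γ (contraD1 Γ μ b) a c q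
      = contraD1 Γ (fun c p => (if b = c then ρ p else 0) - ∑ d, σ c d p * P b d p) a c q :=
        contraD1_congr (fun c => Filter.eventually_of_mem (hD.isOpen.mem_nhds hq) fun p hp =>
          hρ.contraD1_μ b c p hp) a c
    _ = _ := by rw [contraD1_sub hρ' (by fun_prop), contraD1_ite, contraD1_sum_mul hσ (hP b)]

lemma ProlongedSolution.curl_ρ (hD : EquiaffineData U Γ ε P)
    (hρ : ProlongedSolution U Γ P σ μ ρ) (hq : q ∈ U) (a b c : Fin 2) :
    (if b = c then pd a ρ q else 0) - (if a = c then pd b ρ q else 0)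
      = 2 * ∑ d, Ytens Γ P a b d q * σ c d q
        + 2 * ((if a = c then ∑ d, P b d q * μ d q else 0)
          - (if b = c then ∑ d, P a d q * μ d q else 0)) := by
  have ricci := contraD1_comm (fun c a b => hD.differentiableAt (hD.Γ_smooth c a b) hq)
    (fun c => hD.contDiffAt_two (hρ.μ_smooth c) hq) a b c
  have cotton (d : Fin 2) := two_mul_Ytens_eq (T := P) (q := q) hD.Γ_symm a b d
  have contract (a b : Fin 2) : ∑ d, contraD2 Γ σ a c d q * P b d q
      = (if a = c then ∑ d, P b d q * μ d q else 0) + P b a q * μ c q := by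
    simp only [hρ.contraD2_σ _ _ _ q hq, add_mul, ite_mul, zero_mul, Finset.sum_add_distrib,
      Finset.sum_ite_irrel, Finset.sum_ite_eq, Finset.sum_const_zero, Finset.mem_univ, if_true,
      mul_comm (μ _ q)]
  have schouten : ∑ d, Rcurv Γ c a b d q * μ d q
      = (if a = c then ∑ d, P b d q * μ d q else 0)
        - (if b = c then ∑ d, P a d q * μ d q else 0) := by
    simp [hD.schouten _ _ _ _ q hq, sub_mul, Finset.sum_sub_distrib, @eq_comm _ c]
  simp only [hρ.contraD1_contraD1_μ hD hq, Finset.sum_add_distrib, contract, schouten,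
    hD.P_symm b a, hD.Γ_symm c b a] at ricci
  simp only [Fin.sum_univ_two] at ricci ⊢
  linear_combination ricci - σ c 0 q * cotton 0 - σ c 1 q * cotton 1

theorem ProlongedSolution.pd_ρ (hD : EquiaffineData U Γ ε P)
    (hρ : ProlongedSolution U Γ P σ μ ρ) (hq : q ∈ U) (a : Fin 2) :
    pd a ρ q = 2 * ∑ c, ∑ d, Ytens Γ P a c d q * σ c d q - 2 * ∑ d, P a d q * μ d q := by
  have contracted := Finset.sum_congr rfl fun b (_ : b ∈ Finset.univ) => hρ.curl_ρ hD hq a b b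
  simp only [if_true, Finset.sum_sub_distrib, Finset.sum_add_distrib, ← Finset.mul_sum,
    Finset.sum_const, Finset.card_univ, Fintype.card_fin, Finset.sum_ite_eq, Finset.mem_univ,
    two_nsmul] at contracted
  linear_combination contracted

lemma sum_contraD1_skew_mul_pd_eq_zero (hΓ : ∀ c a b, Γ c a b = Γ c b a)
    {s : Fin 2 → Fin 2 → ℝ × ℝ → ℝ} (hs : ∀ a b, DifferentiableAt ℝ (s a b) q)
    (hskew : ∀ a b, s a b q = -s b a q) (hpar : ∀ a b c, contraD2 Γ s a b c q = 0)
    (hf : ContDiffAt ℝ 2 f q) :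
    ∑ a, contraD1 Γ (fun a p => ∑ b, s a b p * pd b f p) a a q = 0 := by
  have hessian : covD1 Γ (fun b => pd b f) 0 1 q = covD1 Γ (fun b => pd b f) 1 0 q := by
    simp only [covD1, pd_comm 0 1 hf, hΓ _ 0 1]
  have diag (a : Fin 2) : s a a q = 0 := by linarith [hskew a a]
  simp only [contraD1_sum_mul hs (fun b => differentiableAt_pd b hf), hpar]
  simp only [Fin.sum_univ_two, diag, hessian, hskew 1 0]
  ring

end Prolongation

/-! ### The first obstruction and its derivatives -/

namespace EquiaffineData

variable {U : Set (ℝ × ℝ)} {Γ : Fin 2 → Fin 2 → Fin 2 → ℝ × ℝ → ℝ}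
  {ε P : Fin 2 → Fin 2 → ℝ × ℝ → ℝ}

lemma contDiffOn_Yform (hD : EquiaffineData U Γ ε P) (c : Fin 2) :
    ContDiffOn ℝ (⊤ : ℕ∞) (Yform Γ ε P c) U := by
  have hdP := contDiffOn_covD2 (m := (⊤ : ℕ∞)) hD.isOpen (by simp) hD.Γ_smooth hD.P_smooth
  have := hD.ε_smooth
  unfold Yform
  fun_prop

lemma contDiffOn_DY (hD : EquiaffineData U Γ ε P) (a c : Fin 2) :
    ContDiffOn ℝ (⊤ : ℕ∞) (DY Γ ε P a c) U :=
  contDiffOn_covD1 hD.isOpen (by simp) hD.Γ_smooth hD.contDiffOn_Yform a c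

lemma contDiffOn_Ztens (hD : EquiaffineData U Γ ε P) (a b : Fin 2) :
    ContDiffOn ℝ (⊤ : ℕ∞) (Ztens Γ ε P a b) U :=
  contDiffOn_const.mul ((hD.contDiffOn_DY a b).add (hD.contDiffOn_DY b a))

lemma contDiffOn_DZ (hD : EquiaffineData U Γ ε P) (a c d : Fin 2) :
    ContDiffOn ℝ (⊤ : ℕ∞) (DZ Γ ε P a c d) U :=
  contDiffOn_covD2 hD.isOpen (by simp) hD.Γ_smooth hD.contDiffOn_Ztens a c d

lemma sum_ε_mul_Ytens (hD : EquiaffineData U Γ ε P) (a c d : Fin 2) (q : ℝ × ℝ) :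
    ∑ b, ε a b q * Ytens Γ P b c d q = if a = c then -(1 / 2) * Yform Γ ε P d q else 0 := by
  have diag (a : Fin 2) : ε a a q = 0 := by linarith [hD.ε_skew a a q]
  simp only [Yform, Ytens, Fin.sum_univ_two]
  fin_cases a <;> fin_cases c <;> simp [diag, hD.ε_skew 1 0 q] <;> ring

end EquiaffineData

section Constraint

variable {U : Set (ℝ × ℝ)} {Γ : Fin 2 → Fin 2 → Fin 2 → ℝ × ℝ → ℝ}
  {ε P σ : Fin 2 → Fin 2 → ℝ × ℝ → ℝ} {μ : Fin 2 → ℝ × ℝ → ℝ} {ρ : ℝ × ℝ → ℝ} {q : ℝ × ℝ}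

lemma ProlongedSolution.sum_ε_mul_pd_ρ (hD : EquiaffineData U Γ ε P)
    (hρ : ProlongedSolution U Γ P σ μ ρ) (hq : q ∈ U) (a : Fin 2) :
    ∑ b, ε a b q * pd b ρ q
      = -2 * ∑ b, ε a b q * ∑ d, P b d q * μ d q - ∑ d, σ a d q * Yform Γ ε P d q := by
  have cotton (c d : Fin 2) := hD.sum_ε_mul_Ytens a c d q
  calc ∑ b, ε a b q * pd b ρ q
      = 2 * ∑ c, ∑ d, (∑ b, ε a b q * Ytens Γ P b c d q) * σ c d q
          - 2 * ∑ b, ε a b q * ∑ d, P b d q * μ d q := by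
        simp only [hρ.pd_ρ hD hq, Fin.sum_univ_two]
        ring
    _ = _ := by
        simp only [cotton, ite_mul, zero_mul, Finset.sum_ite_irrel, Finset.sum_const_zero,
          Finset.sum_ite_eq, Finset.mem_univ, if_true, Fin.sum_univ_two]
        ring

lemma ProlongedSolution.sum_contraD1_ε_mul_P_mul_μ (hD : EquiaffineData U Γ ε P)
    (hρ : ProlongedSolution U Γ P σ μ ρ) (hq : q ∈ U) :
    ∑ a, contraD1 Γ (fun a p => ∑ b, ε a b p * ∑ d, P b d p * μ d p) a a q
      = ∑ d, Yform Γ ε P d q * μ d q := by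
  have hε (a b : Fin 2) := hD.differentiableAt (hD.ε_smooth a b) hq
  have hP (a b : Fin 2) := hD.differentiableAt (hD.P_smooth a b) hq
  have hμ (a : Fin 2) := hD.differentiableAt (hρ.μ_smooth a) hq
  have diag (a : Fin 2) : ε a a q = 0 := by linarith [hD.ε_skew a a q]
  have leibniz (a b : Fin 2) := contraD1_sum_mul (Γ := Γ) hε
    (φ := fun b p => ∑ d, P b d p * μ d p) (by fun_prop) a b
  simp only [leibniz, hD.ε_parallel _ _ _ q hq, covD1_sum_mul hP hμ, hρ.contraD1_μ _ _ q hq]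
  simp only [Yform, Fin.sum_univ_two, diag, hD.ε_skew 1 0, hD.P_symm 1 0, hρ.σ_symm 1 0,
    if_true, zero_ne_one, one_ne_zero, if_false]
  ring

lemma MetrisabilitySolution.sum_contraD1_σ_mul_Yform (hD : EquiaffineData U Γ ε P)
    (hσ : MetrisabilitySolution U Γ σ μ) (hq : q ∈ U) :
    ∑ a, contraD1 Γ (fun a p => ∑ d, σ a d p * Yform Γ ε P d p) a a q
      = 3 * ∑ d, Yform Γ ε P d q * μ d q + ∑ c, ∑ d, Ztens Γ ε P c d q * σ c d q := by
  have hσ' (a b : Fin 2) := hD.differentiableAt (hσ.σ_smooth a b) hq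
  have hY (a : Fin 2) := hD.differentiableAt (hD.contDiffOn_Yform a) hq
  simp only [contraD1_sum_mul hσ' hY, hσ.contraD2_σ _ _ _ q hq]
  simp only [Ztens, Fin.sum_univ_two, hσ.σ_symm 1 0, if_true, zero_ne_one, one_ne_zero, if_false]
  ring

/-- The integrability condition of `pd_ρ`: the vector field `ε^{ab}∇_bρ` is divergence free. -/
theorem ProlongedSolution.constraint (hD : EquiaffineData U Γ ε P)
    (hρ : ProlongedSolution U Γ P σ μ ρ) (hq : q ∈ U) :
    5 * ∑ c, Yform Γ ε P c q * μ c q + ∑ c, ∑ d, Ztens Γ ε P c d q * σ c d q = 0 := by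
  have hε (a b : Fin 2) := hD.differentiableAt (hD.ε_smooth a b) hq
  have hP (a b : Fin 2) := hD.differentiableAt (hD.P_smooth a b) hq
  have hσ (a b : Fin 2) := hD.differentiableAt (hρ.σ_smooth a b) hq
  have hμ (a : Fin 2) := hD.differentiableAt (hρ.μ_smooth a) hq
  have hY (a : Fin 2) := hD.differentiableAt (hD.contDiffOn_Yform a) hq
  have turned_gradient (a : Fin 2) :
      contraD1 Γ (fun a p => ∑ b, ε a b p * pd b ρ p) a a q
        = -2 * contraD1 Γ (fun a p => ∑ b, ε a b p * ∑ d, P b d p * μ d p) a a q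
          - contraD1 Γ (fun a p => ∑ d, σ a d p * Yform Γ ε P d p) a a q := by
    rw [contraD1_congr fun a => Filter.eventually_of_mem (hD.isOpen.mem_nhds hq) fun p hp =>
      hρ.sum_ε_mul_pd_ρ hD hp a, contraD1_sub (by fun_prop) (by fun_prop),
      contraD1_const_mul _ (by fun_prop)]
  have divergence_free := sum_contraD1_skew_mul_pd_eq_zero hD.Γ_symm hε (fun a b => hD.ε_skew a b q)
    (fun a b c => hD.ε_parallel a b c q hq) (hD.contDiffAt_two hρ.ρ_smooth hq)
  simp only [turned_gradient, Finset.sum_sub_distrib, ← Finset.mul_sum,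
    hρ.sum_contraD1_ε_mul_P_mul_μ hD hq, hρ.sum_contraD1_σ_mul_Yform hD hq] at divergence_free
  linear_combination -divergence_free

end Constraint

section Symmetries

variable {Γ : Fin 2 → Fin 2 → Fin 2 → ℝ × ℝ → ℝ} {ε P : Fin 2 → Fin 2 → ℝ × ℝ → ℝ}

lemma Ztens_comm (c d : Fin 2) : Ztens Γ ε P c d = Ztens Γ ε P d c := by
  funext q
  simp only [Ztens, add_comm]

lemma DZ_comm (a c d : Fin 2) : DZ Γ ε P a c d = DZ Γ ε P a d c := by
  funext q
  simpa only [DZ, ← Ztens_comm] using (covD2_transpose (Γ := Γ) (T := Ztens Γ ε P) a c d)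

lemma DDZ_comm (a b c d : Fin 2) : DDZ Γ ε P a b c d = DDZ Γ ε P a b d c := by
  funext q
  simpa only [DDZ, ← DZ_comm] using (covD3_transpose (Γ := Γ) (V := DZ Γ ε P) a b c d)

lemma Vtens_comm (c d a : Fin 2) : Vtens Γ ε P c d a = Vtens Γ ε P d c a := by
  funext q
  simp only [Vtens, DZ_comm a c d]
  ring

lemma Xtens_comm (c d a b : Fin 2) : Xtens Γ ε P c d a b = Xtens Γ ε P d c a b := by
  funext q
  simp only [Xtens, DDZ_comm _ _ c d]
  ring

end Symmetries

section ConstraintDerivatives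

variable {U : Set (ℝ × ℝ)} {Γ : Fin 2 → Fin 2 → Fin 2 → ℝ × ℝ → ℝ}
  {ε P σ : Fin 2 → Fin 2 → ℝ × ℝ → ℝ} {μ : Fin 2 → ℝ × ℝ → ℝ} {ρ : ℝ × ℝ → ℝ} {q : ℝ × ℝ}

theorem ProlongedSolution.deriv_constraint (hD : EquiaffineData U Γ ε P)
    (hρ : ProlongedSolution U Γ P σ μ ρ) (hq : q ∈ U) (a : Fin 2) :
    5 * Yform Γ ε P a q * ρ q + ∑ c, Stens Γ ε P c a q * μ c q
      + ∑ c, ∑ d, Vtens Γ ε P c d a q * σ c d q = 0 := by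
  have hσ (c d : Fin 2) := hD.differentiableAt (hρ.σ_smooth c d) hq
  have hμ (c : Fin 2) := hD.differentiableAt (hρ.μ_smooth c) hq
  have hY (c : Fin 2) := hD.differentiableAt (hD.contDiffOn_Yform c) hq
  have hZ (c d : Fin 2) := hD.differentiableAt (hD.contDiffOn_Ztens c d) hq
  have derivative : pd a (fun p => 5 * ∑ c, Yform Γ ε P c p * μ c p
      + ∑ c, ∑ d, Ztens Γ ε P c d p * σ c d p) q = 0 := by
    rw [pd_congr a (Filter.eventually_of_mem (hD.isOpen.mem_nhds hq) fun p hp =>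
      hρ.constraint hD hp), pd_const]
  rw [pd_add a (by fun_prop) (by fun_prop), pd_const_mul a 5 (by fun_prop),
    pd_sum_mul (Γ := Γ) hY hμ, pd_sum_sum_mul (Γ := Γ) hZ hσ] at derivative
  simp only [hρ.contraD1_μ _ _ q hq, hρ.contraD2_σ _ _ _ q hq, mul_sub, mul_add, mul_ite, mul_zero,
    Finset.sum_add_distrib, Finset.sum_sub_distrib, Finset.sum_ite_irrel, Finset.sum_ite_eq,
    Finset.sum_const_zero, Finset.mem_univ, if_true] at derivative
  simp only [Stens, Vtens, DY, DZ, Fin.sum_univ_two, hρ.σ_symm 1 0, Ztens_comm _ a] at derivative ⊢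
  linear_combination derivative

lemma EquiaffineData.contDiffOn_Stens (hD : EquiaffineData U Γ ε P) (c a : Fin 2) :
    ContDiffOn ℝ (⊤ : ℕ∞) (Stens Γ ε P c a) U :=
  (contDiffOn_const.mul (hD.contDiffOn_DY a c)).add (contDiffOn_const.mul (hD.contDiffOn_Ztens a c))

lemma EquiaffineData.contDiffOn_Vtens (hD : EquiaffineData U Γ ε P) (c d a : Fin 2) :
    ContDiffOn ℝ (⊤ : ℕ∞) (Vtens Γ ε P c d a) U :=
  (hD.contDiffOn_DZ a c d).sub (contDiffOn_const.mul
    (((hD.P_smooth a c).mul (hD.contDiffOn_Yform d)).add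
      ((hD.P_smooth a d).mul (hD.contDiffOn_Yform c))))

lemma EquiaffineData.covD2_Stens (hD : EquiaffineData U Γ ε P) (hq : q ∈ U) (b a c : Fin 2) :
    covD2 Γ (fun a c => Stens Γ ε P c a) b a c q
      = 5 * DDY Γ ε P b a c q + 2 * DZ Γ ε P b a c q := by
  have hDY (a c : Fin 2) := hD.differentiableAt (hD.contDiffOn_DY a c) hq
  have hZ (c d : Fin 2) := hD.differentiableAt (hD.contDiffOn_Ztens c d) hq
  unfold Stens
  simp (disch := fun_prop) only [covD2, DDY, DZ, Fin.sum_univ_two, pd_add, pd_const_mul]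
  ring

lemma EquiaffineData.covD3_Vtens (hD : EquiaffineData U Γ ε P) (hq : q ∈ U) (b a c d : Fin 2) :
    covD3 Γ (fun a c d => Vtens Γ ε P c d a) b a c d q = DDZ Γ ε P b a c d q
      - 5 / 2 * (covD2 Γ P b a c q * Yform Γ ε P d q + P a c q * DY Γ ε P b d q
        + covD2 Γ P b a d q * Yform Γ ε P c q + P a d q * DY Γ ε P b c q) := by
  have hP (a c : Fin 2) := hD.differentiableAt (hD.P_smooth a c) hq
  have hY (c : Fin 2) := hD.differentiableAt (hD.contDiffOn_Yform c) hq
  have hDZ (a c d : Fin 2) := hD.differentiableAt (hD.contDiffOn_DZ a c d) hq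
  unfold Vtens
  simp (disch := fun_prop) only [covD3, covD2, covD1, DDZ, DY, Fin.sum_univ_two, pd_sub, pd_add,
    pd_mul, pd_const]
  ring

lemma ProlongedSolution.deriv_deriv_constraint (hD : EquiaffineData U Γ ε P)
    (hρ : ProlongedSolution U Γ P σ μ ρ) (hq : q ∈ U) (b a : Fin 2) :
    (5 * DY Γ ε P b a q + Stens Γ ε P b a q) * ρ q
      + ∑ c, (covD2 Γ (fun a c => Stens Γ ε P c a) b a c q + 2 * Vtens Γ ε P b c a q
          - 10 * Yform Γ ε P a q * P b c q) * μ c q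
      + ∑ c, ∑ d, (covD3 Γ (fun a c d => Vtens Γ ε P c d a) b a c d q
          - Stens Γ ε P c a q * P b d q
          + 10 * Yform Γ ε P a q * Ytens Γ P b c d q) * σ c d q = 0 := by
  have hσ (c d : Fin 2) := hD.differentiableAt (hρ.σ_smooth c d) hq
  have hμ (c : Fin 2) := hD.differentiableAt (hρ.μ_smooth c) hq
  have hρ' := hD.differentiableAt hρ.ρ_smooth hq
  have hY (c : Fin 2) := hD.differentiableAt (hD.contDiffOn_Yform c) hq
  have hS (c a : Fin 2) := hD.differentiableAt (hD.contDiffOn_Stens c a) hq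
  have hV (c d a : Fin 2) := hD.differentiableAt (hD.contDiffOn_Vtens c d a) hq
  have derivative : covD1 Γ (fun a p => 5 * ρ p * Yform Γ ε P a p
      + ∑ c, Stens Γ ε P c a p * μ c p + ∑ c, ∑ d, Vtens Γ ε P c d a p * σ c d p) b a q = 0 := by
    rw [covD1_congr (ψ := fun _ _ => 0) fun a =>
      Filter.eventually_of_mem (hD.isOpen.mem_nhds hq) fun p hp => ?_]
    · simp [covD1, pd_const]
    · rw [mul_right_comm]
      exact hρ.deriv_constraint hD hp a
  rw [covD1_add (by fun_prop) (by fun_prop), covD1_add (by fun_prop) (by fun_prop),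
    covD1_mul (by fun_prop) hY, pd_const_mul b 5 hρ', hρ.pd_ρ hD hq,
    covD1_sum_mul (T := fun a c => Stens Γ ε P c a) (fun a c => hS c a) hμ,
    covD1_sum_sum_mul (V := fun a c d => Vtens Γ ε P c d a) (fun a c d => hV c d a) hσ]
    at derivative
  simp only [hρ.contraD1_μ _ _ q hq, hρ.contraD2_σ _ _ _ q hq, mul_sub, mul_add, mul_ite, mul_zero,
    Finset.sum_add_distrib, Finset.sum_sub_distrib, Finset.sum_ite_irrel, Finset.sum_ite_eq,
    Finset.sum_const_zero, Finset.mem_univ, if_true] at derivative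
  simp only [DY, Fin.sum_univ_two, hρ.σ_symm 1 0, Vtens_comm _ b] at derivative ⊢
  linear_combination derivative

theorem ProlongedSolution.hessian_constraint (hD : EquiaffineData U Γ ε P)
    (hρ : ProlongedSolution U Γ P σ μ ρ) (hq : q ∈ U) (a b : Fin 2) :
    12 * Ztens Γ ε P a b q * ρ q + ∑ c, Ttens Γ ε P c a b q * μ c q
      + ∑ c, ∑ d, Xtens Γ ε P c d a b q * σ c d q = 0 := by
  have hab := hρ.deriv_deriv_constraint hD hq a b
  have hba := hρ.deriv_deriv_constraint hD hq b a
  simp only [hD.covD2_Stens hq, hD.covD3_Vtens hq] at hab hba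
  simp only [Ttens, Xtens, Stens, Vtens, Fin.sum_univ_two, hρ.σ_symm 1 0, Ztens_comm b a,
    hD.P_symm 0 a, hD.P_symm 0 b, hD.P_symm 1 a, hD.P_symm 1 b, hD.P_symm b a] at hab hba ⊢
  have hZ : Ztens Γ ε P a b q = 1 / 2 * (DY Γ ε P a b q + DY Γ ε P b a q) := rfl
  linear_combination (hab + hba) / 2 + 10 * ρ q * hZ

end ConstraintDerivatives

/-! ### The tractor matrix -/

section TractorMatrix

variable {U : Set (ℝ × ℝ)} {Γ : Fin 2 → Fin 2 → Fin 2 → ℝ × ℝ → ℝ}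
  {ε P σ : Fin 2 → Fin 2 → ℝ × ℝ → ℝ} {μ : Fin 2 → ℝ × ℝ → ℝ} {ρ : ℝ × ℝ → ℝ} {q : ℝ × ℝ}

/-- The section `(ρ, μ^c, σ^{cd})` of the prolongation bundle at `q`, in the row order of
`TractorMat`. The independent component `σ^{12}` is doubled since it is paired with the row of
`(c,d) = (1,2)` only. -/
def tractorVec (σ : Fin 2 → Fin 2 → ℝ × ℝ → ℝ) (μ : Fin 2 → ℝ × ℝ → ℝ) (ρ : ℝ × ℝ → ℝ)
    (q : ℝ × ℝ) : Fin 6 → ℝ :=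
  ![ρ q, μ 0 q, μ 1 q, σ 0 0 q, 2 * σ 0 1 q, σ 1 1 q]

theorem ProlongedSolution.vecMul_tractorMat (hD : EquiaffineData U Γ ε P)
    (hρ : ProlongedSolution U Γ P σ μ ρ) (hq : q ∈ U) :
    tractorVec σ μ ρ q ᵥ* TractorMat Γ ε P q = 0 := by
  have constraint := hρ.constraint hD hq
  have gradient := hρ.deriv_constraint hD hq
  have hessian := hρ.hessian_constraint hD hq
  simp only [Fin.sum_univ_two, hρ.σ_symm 1 0, Ztens_comm 1 0, Vtens_comm 1 0, Xtens_comm 1 0]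
    at constraint gradient hessian
  ext j
  fin_cases j <;>
    simp only [tractorVec, TractorMat, Matrix.vecMul, dotProduct, Fin.sum_univ_six, Fin.isValue,
      Fin.zero_eta, Fin.mk_one, Fin.reduceFinMk, Matrix.of_apply, Matrix.cons_val, Pi.zero_apply]
  · linear_combination constraint
  · linear_combination gradient 0
  · linear_combination gradient 1
  · linear_combination hessian 0 0
  · linear_combination hessian 0 1
  · linear_combination hessian 1 1

lemma MetrisabilitySolution.tractorVec_ne_zero (hσ : MetrisabilitySolution U Γ σ μ)
    (hne : ∃ b c, σ b c q ≠ 0) : tractorVec σ μ ρ q ≠ 0 := by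
  obtain ⟨b, c, hbc⟩ := hne
  refine fun h => hbc ?_
  have h00 : σ 0 0 q = 0 := congrFun h 3
  have h01 : σ 0 1 q = 0 := by simpa [tractorVec] using congrFun h 4
  have h11 : σ 1 1 q = 0 := congrFun h 5
  have h10 : σ 1 0 q = 0 := hσ.σ_symm 1 0 ▸ h01
  fin_cases b <;> fin_cases c
  exacts [h00, h01, h10, h11]

theorem MetrisabilitySolution.det_tractorMat_eq_zero (hD : EquiaffineData U Γ ε P)
    (hσ : MetrisabilitySolution U Γ σ μ) (hq : q ∈ U) (hne : ∃ b c, σ b c q ≠ 0) :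
    (TractorMat Γ ε P q).det = 0 := by
  obtain ⟨ρ, hρ⟩ := hσ.exists_prolongedSolution hD
  exact Matrix.exists_vecMul_eq_zero_iff.1
    ⟨tractorVec σ μ ρ q, hσ.tractorVec_ne_zero hne, hρ.vecMul_tractorMat hD hq⟩

end TractorMatrix

/-- **Tractor form of the metrisability obstruction.** If `∇` is projectively equivalent
to a Levi–Civita connection, then the determinant `D(Γ)` of the tractor matrix vanishes
identically on `U`. -/
theorem tractor_obstruction (U : Set (ℝ × ℝ)) (hU : IsOpen U)
    (Γ : Fin 2 → Fin 2 → Fin 2 → ℝ × ℝ → ℝ)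
    (hΓsym : ∀ c a b, Γ c a b = Γ c b a)
    (hΓsm : ∀ c a b, ContDiffOn ℝ (⊤ : ℕ∞) (Γ c a b) U)
    (ε : Fin 2 → Fin 2 → ℝ × ℝ → ℝ)
    (hεskew : ∀ a b q, ε a b q = -ε b a q)
    (hεne : ∀ q ∈ U, ε 0 1 q ≠ 0)
    (hεsm : ∀ a b, ContDiffOn ℝ (⊤ : ℕ∞) (ε a b) U)
    (hεpar : ∀ a b c : Fin 2, ∀ q ∈ U,
      pd a (ε b c) q + (∑ e : Fin 2, Γ b a e q * ε e c q)
        + (∑ e : Fin 2, Γ c a e q * ε b e q) = 0)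
    (P : Fin 2 → Fin 2 → ℝ × ℝ → ℝ)
    (hPsym : ∀ a b, P a b = P b a)
    (hPsm : ∀ a b, ContDiffOn ℝ (⊤ : ℕ∞) (P a b) U)
    (hSchouten : ∀ c a b d : Fin 2, ∀ q ∈ U,
      Rcurv Γ c a b d q
        = (if c = a then P b d q else 0) - (if c = b then P a d q else 0))
    (hmet : ProjEquivLeviCivita U Γ) :
    ∀ q ∈ U, (TractorMat Γ ε P q).det = 0 := by
  have hD : EquiaffineData U Γ ε P :=
    ⟨hU, hΓsym, hΓsm, hεskew, hεne, hεsm, hεpar, hPsym, hPsm, hSchouten⟩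
  obtain ⟨σ, μ, hσ, hne⟩ := hD.exists_metrisabilitySolution hmet
  exact fun q hq => hσ.det_tractorMat_eq_zero hD hq (hne q hq)
end

section
/- (Maximal rank of the higher-dimensional metrisability obstruction) Fix an integer n ≥ 3 and let all indices range over {1,…,n}. Define the array W^c_{abd} whose only nonzero components are: W¹_{121} = −W¹_{211} = 3(n²−n−1); W²_{122} = −W²_{212} = 3; W³_{123} = −W³_{213} = −(n−1)(2n+3); W^c_{12c} = −W^c_{21c} = −(n−1) for every c ≥ 4; W³_{132} = −W³_{312} = −(n²−n−3); W^c_{1c2} = −W^c_{c12} = n+2 for every c ≥ 4; W³_{231} = −W³_{321} = n(n+2); W^c_{2c1} = −W^c_{c21} = 2n+1 for every c ≥ 4. Then: (i) W has the symmetries of a projective Weyl tensor, namely W^c_{abd} = −W^c_{bad}, W^c_{[abd]} = 0 (vanishing total antisymmetrisation of the three lower indices), and the trace Σ_a W^a_{abd} = 0; and (ii) with Ξ^{cd}_{abef} := W^c_{ab(e}δ^d_{f)} + W^d_{ab(e}δ^c_{f)} + (2/n)δ^c_{[a}W^d_{b](ef)} + (2/n)δ^d_{[a}W^c_{b](ef)},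 the linear map sending a symmetric 2-tensor σ^{ef} to the symmetric 2-tensor Σ_{e,f} Ξ^{cd}_{12ef}σ^{ef} is invertible; indeed in the standard basis of symmetric pairs it is represented by a diagonal matrix with nonzero diagonal entries. -/
/-!
For fixed `c`, the array `W^c_{abd}` is `S^c_{abd} - S^c_{bad}`, where
`S^c_{abd} = p_c δ_{a1} (δ_{b2} δ_{dc} + δ_{bc} δ_{d2})
  + q_c δ_{a2} (δ_{b1} δ_{dc} + δ_{bc} δ_{d1})`,
for two vectors of coefficients `p`, `q`. Since `S` is symmetric in its last two indices, the
Bianchi identity holds for every choice of `p` and `q`; the vanishing of the trace amounts to one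
linear equation on `p` and one on `q`.

Contracting with a symmetric `σ`, one finds that `W^c_{12e} σ^{ed}` is a multiple of `σ^{cd}`, that
`W^d_{2ef} σ^{ef}` is a multiple of `σ^{1d}` and that `W^d_{1ef} σ^{ef}` is a multiple of `σ^{2d}`.
In `Ξ^{cd}_{12ef} σ^{ef}` the latter two appear with the factors `δ^c_1` and `δ^c_2`, so every term
is a multiple of `σ^{cd}`: the map is diagonal. For the given coefficients, `n` times its entries
are products of `n - 1` and simple polynomials in `n`, none of which vanishes.
-/

noncomputable section

/-- The particular tensor `W^c_{abd}` of the paper (indices written 0-based: the paper's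
index `i ∈ {1,…,n}` is `i−1` here, so "c ≥ 4" becomes `3 ≤ c.val`). -/
def Wten (n : ℕ) (c a b d : Fin n) : ℝ :=
  if c.val = 0 ∧ a.val = 0 ∧ b.val = 1 ∧ d.val = 0 then 3 * ((n : ℝ) ^ 2 - n - 1)
  else if c.val = 0 ∧ a.val = 1 ∧ b.val = 0 ∧ d.val = 0 then -(3 * ((n : ℝ) ^ 2 - n - 1))
  else if c.val = 1 ∧ a.val = 0 ∧ b.val = 1 ∧ d.val = 1 then 3
  else if c.val = 1 ∧ a.val = 1 ∧ b.val = 0 ∧ d.val = 1 then -3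
  else if c.val = 2 ∧ a.val = 0 ∧ b.val = 1 ∧ d.val = 2 then
    -(((n : ℝ) - 1) * (2 * n + 3))
  else if c.val = 2 ∧ a.val = 1 ∧ b.val = 0 ∧ d.val = 2 then
    ((n : ℝ) - 1) * (2 * n + 3)
  else if 3 ≤ c.val ∧ a.val = 0 ∧ b.val = 1 ∧ d = c then -((n : ℝ) - 1)
  else if 3 ≤ c.val ∧ a.val = 1 ∧ b.val = 0 ∧ d = c then (n : ℝ) - 1
  else if c.val = 2 ∧ a.val = 0 ∧ b.val = 2 ∧ d.val = 1 then -((n : ℝ) ^ 2 - n - 3)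
  else if c.val = 2 ∧ a.val = 2 ∧ b.val = 0 ∧ d.val = 1 then (n : ℝ) ^ 2 - n - 3
  else if 3 ≤ c.val ∧ a.val = 0 ∧ b = c ∧ d.val = 1 then (n : ℝ) + 2
  else if 3 ≤ c.val ∧ a = c ∧ b.val = 0 ∧ d.val = 1 then -((n : ℝ) + 2)
  else if c.val = 2 ∧ a.val = 1 ∧ b.val = 2 ∧ d.val = 0 then (n : ℝ) * (n + 2)
  else if c.val = 2 ∧ a.val = 2 ∧ b.val = 1 ∧ d.val = 0 then -((n : ℝ) * (n + 2))
  else if 3 ≤ c.val ∧ a.val = 1 ∧ b = c ∧ d.val = 0 then 2 * (n : ℝ) + 1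
  else if 3 ≤ c.val ∧ a = c ∧ b.val = 1 ∧ d.val = 0 then -(2 * (n : ℝ) + 1)
  else 0

/-- `W^d_{b(ef)}`, symmetrisation (weight `1/2`) of the last two lower indices. -/
def WtenSym (n : ℕ) (d b e f : Fin n) : ℝ :=
  (1/2) * (Wten n d b e f + Wten n d b f e)

/-- Kronecker delta on `Fin n`. -/
def kron (n : ℕ) (a b : Fin n) : ℝ := if a = b then 1 else 0

/-- `Ξ^{cd}_{abef}` built from `W` as in the statement. -/
def Xi (n : ℕ) (c d a b e f : Fin n) : ℝ :=
  (1/2) * (Wten n c a b e * kron n d f + Wten n c a b f * kron n d e)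
    + (1/2) * (Wten n d a b e * kron n c f + Wten n d a b f * kron n c e)
    + (2 / (n : ℝ)) * ((1/2) * (kron n c a * WtenSym n d b e f
        - kron n c b * WtenSym n d a e f))
    + (2 / (n : ℝ)) * ((1/2) * (kron n d a * WtenSym n c b e f
        - kron n d b * WtenSym n c a e f))

end

section Symmetric

variable {ι : Type*}

lemma sum_sum_swap_mul_of_symm {R : Type*} [NonUnitalNonAssocSemiring R] [Fintype ι]
    (T : ι → ι → R) {σ : ι → ι → R} (hσ : ∀ i j, σ i j = σ j i) :
    ∑ e, ∑ f, T f e * σ e f = ∑ e, ∑ f, T e f * σ e f := by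
  rw [Finset.sum_comm]
  simp only [hσ]

lemma existsUnique_symm_of_forall_eq_mul {K : Type*} [CommGroupWithZero K]
    {L : (ι → ι → K) → ι → ι → K} {lam : ι → ι → K}
    (hlam : ∀ c d, lam c d = lam d c) (hlam₀ : ∀ c d, lam c d ≠ 0)
    (hL : ∀ σ : ι → ι → K, (∀ i j, σ i j = σ j i) → ∀ c d, L σ c d = lam c d * σ c d)
    {τ : ι → ι → K} (hτ : ∀ i j, τ i j = τ j i) :
    ∃! σ : {σ : ι → ι → K // ∀ i j, σ i j = σ j i}, ∀ c d, L σ.1 c d = τ c d := by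
  have hdiv : ∀ c d, τ c d / lam c d = τ d c / lam d c := fun c d => by rw [hτ, hlam]
  refine ⟨⟨fun c d => τ c d / lam c d, hdiv⟩, fun c d => ?_, fun σ hσ => ?_⟩
  · rw [hL _ hdiv, mul_div_cancel₀ _ (hlam₀ c d)]
  · ext c d
    rw [eq_div_iff (hlam₀ c d), mul_comm, ← hL σ.1 σ.2, hσ]

end Symmetric

section SkewFirst

variable {ι A : Type*} [AddCommGroup A]

/-- Twice the antisymmetrisation of a three-index array in its first two indices. -/
def skewFirst (S : ι → ι → ι → A) (a b d : ι) : A := S a b d - S b a d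

lemma skewFirst_antisymm (S : ι → ι → ι → A) (a b d : ι) :
    skewFirst S a b d = -skewFirst S b a d :=
  (neg_sub _ _).symm

lemma skewFirst_bianchi {S : ι → ι → ι → A} (hS : ∀ a b d, S a b d = S a d b) (a b d : ι) :
    skewFirst S a b d + skewFirst S b d a + skewFirst S d a b
      - skewFirst S b a d - skewFirst S a d b - skewFirst S d b a = 0 := by
  simp only [skewFirst]
  rw [hS a b d, hS b d a, hS d a b]
  abel

end SkewFirst

section KroneckerDelta

variable {ι R : Type*} [DecidableEq ι] [NonAssocSemiring R]

local notation "δ" => (1 : Matrix ι ι R)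

lemma one_apply_mul_congr (a b : ι) (g : ι → R) : δ a b * g b = δ a b * g a := by
  obtain rfl | h := eq_or_ne a b
  · rfl
  · simp only [Matrix.one_apply_ne h, zero_mul]

lemma sum_sum_mul_one_apply_mul [Fintype ι] (k : R) (x y : ι) (σ : ι → ι → R) :
    ∑ e, ∑ f, k * δ e x * δ f y * σ e f = k * σ x y := by
  simp only [Matrix.one_apply, mul_ite, ite_mul, mul_one, mul_zero, zero_mul,
    Finset.sum_ite_eq', Finset.mem_univ, if_true]

end KroneckerDelta

section PlaneWeyl

variable {ι R : Type*} [DecidableEq ι] [CommRing R]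

local notation "δ" => (1 : Matrix ι ι R)

/-- The array `S^c_{abd}` with coefficients `p`, `q` whose `skewFirst` is the tensor
`planeWeyl`. Kronecker deltas are entries of the identity matrix. -/
def planeSymbol (i j : ι) (p q : ι → R) (c a b d : ι) : R :=
  p c * δ a i * (δ b j * δ d c + δ b c * δ d j) + q c * δ a j * (δ b i * δ d c + δ b c * δ d i)

/-- The Weyl-type tensor `W^c_{abd}` with coefficients `p`, `q` attached to the coordinate plane
spanned by the directions `i` and `j`. The paper's tensor is the case `i = 1`, `j = 2`. -/
def planeWeyl (i j : ι) (p q : ι → R) (c : ι) : ι → ι → ι → R :=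
  skewFirst (planeSymbol i j p q c)

lemma planeSymbol_swap (i j : ι) (p q : ι → R) : planeSymbol j i q p = planeSymbol i j p q := by
  ext c a b d
  exact add_comm _ _

lemma planeWeyl_swap (i j : ι) (p q : ι → R) : planeWeyl j i q p = planeWeyl i j p q := by
  simp only [funext_iff, planeWeyl, planeSymbol_swap i j, implies_true]

lemma planeSymbol_symm (i j : ι) (p q : ι → R) (c a b d : ι) :
    planeSymbol i j p q c a b d = planeSymbol i j p q c a d b := by
  simp only [planeSymbol]
  ring

lemma planeWeyl_bianchi (i j : ι) (p q : ι → R) (c a b d : ι) :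
    planeWeyl i j p q c a b d + planeWeyl i j p q c b d a + planeWeyl i j p q c d a b
      - planeWeyl i j p q c b a d - planeWeyl i j p q c a d b - planeWeyl i j p q c d b a = 0 :=
  skewFirst_bianchi (planeSymbol_symm i j p q c) a b d

lemma planeWeyl_trace [Fintype ι] {i j : ι} {p q : ι → R}
    (hp : ∑ a, p a + p j = p i + q j) (hq : ∑ a, q a + q i = p i + q j) (b d : ι) :
    ∑ a, planeWeyl i j p q a a b d = 0 := by
  have hS : ∑ a, planeSymbol i j p q a a b d =
      (p i + q j) * (δ b j * δ d i + δ b i * δ d j) := by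
    simp only [planeSymbol, Finset.sum_add_distrib, Matrix.one_apply, mul_ite, ite_mul, mul_one,
      mul_zero, zero_mul, Finset.sum_ite_eq', Finset.mem_univ, if_true]
    ring
  have hS' : ∑ a, planeSymbol i j p q a b a d =
      (∑ a, p a + p j) * δ b i * δ d j + (∑ a, q a + q i) * δ b j * δ d i := by
    have h : ∀ a, planeSymbol i j p q a b a d =
        p a * δ a j * δ b i * δ d a + p a * δ b i * δ d j
          + q a * δ a i * δ b j * δ d a + q a * δ b j * δ d i := by
      intro a
      simp only [planeSymbol, Matrix.one_apply_eq]
      ring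
    have hsum : ∀ g : ι → R, ∑ a, g a * δ d a = g d := fun g => by simp [Matrix.one_apply]
    simp only [h, Finset.sum_add_distrib, ← Finset.sum_mul, hsum]
    linear_combination -δ b i * one_apply_mul_congr d j p - δ b j * one_apply_mul_congr d i q
  simp only [planeWeyl, skewFirst, Finset.sum_sub_distrib, hS, hS', hp, hq]
  ring

/-- The coefficient `W^c_{ijc}` of the tensor `W = planeWeyl i j p q`. -/
def planeCoeff (i j : ι) (p q : ι → R) (c : ι) : R := (1 + δ j c) * p c - (1 + δ i c) * q c

/-- The factor `k` in `W^c_{jef} σ^{ef} = k σ^{ic}`, for `W = planeWeyl i j p q` and symmetric `σ`.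
Exchanging `i` with `j` and `p` with `q` gives the factor for `W^c_{ief} σ^{ef}`. -/
def contractionCoeff (j : ι) (p q : ι → R) (c : ι) : R := 2 * q c - p c - δ j c * (p c + q c)

lemma planeWeyl_plane {i j : ι} (hij : i ≠ j) (p q : ι → R) (c e : ι) :
    planeWeyl i j p q c i j e = planeCoeff i j p q c * δ e c := by
  simp only [planeWeyl, skewFirst, planeSymbol, planeCoeff, Matrix.one_apply_eq,
    Matrix.one_apply_ne hij, Matrix.one_apply_ne hij.symm]
  linear_combination
    q c * one_apply_mul_congr i c (δ e) - p c * one_apply_mul_congr j c (δ e)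

lemma sum_sum_planeWeyl_right_mul [Fintype ι] {i j : ι} (hij : i ≠ j) (p q : ι → R)
    {σ : ι → ι → R} (hσ : ∀ i j, σ i j = σ j i) (c : ι) :
    ∑ e, ∑ f, planeWeyl i j p q c j e f * σ e f = contractionCoeff j p q c * σ i c := by
  have hS : ∑ e, ∑ f, planeSymbol i j p q c j e f * σ e f = 2 * q c * σ i c := by
    have h : ∀ e f, planeSymbol i j p q c j e f * σ e f =
        q c * δ e i * δ f c * σ e f + q c * δ e c * δ f i * σ e f := by
      intro e f
      simp only [planeSymbol, Matrix.one_apply_eq, Matrix.one_apply_ne hij.symm]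
      ring
    simp only [h, Finset.sum_add_distrib, sum_sum_mul_one_apply_mul, hσ c i]
    ring
  have hS' : ∑ e, ∑ f, planeSymbol i j p q c e j f * σ e f =
      (p c + δ j c * (p c + q c)) * σ i c := by
    have h : ∀ e f, planeSymbol i j p q c e j f * σ e f =
        p c * δ e i * δ f c * σ e f + p c * δ j c * δ e i * δ f j * σ e f
          + q c * δ j c * δ e j * δ f i * σ e f := by
      intro e f
      simp only [planeSymbol, Matrix.one_apply_eq, Matrix.one_apply_ne hij.symm]
      ring
    simp only [h, Finset.sum_add_distrib, sum_sum_mul_one_apply_mul, hσ j i]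
    linear_combination -(p c + q c) * one_apply_mul_congr j c (σ i)
  simp only [planeWeyl, skewFirst, sub_mul, Finset.sum_sub_distrib, hS, hS', contractionCoeff]
  ring

lemma sum_sum_planeWeyl_left_mul [Fintype ι] {i j : ι} (hij : i ≠ j) (p q : ι → R)
    {σ : ι → ι → R} (hσ : ∀ i j, σ i j = σ j i) (c : ι) :
    ∑ e, ∑ f, planeWeyl i j p q c i e f * σ e f = contractionCoeff i q p c * σ j c := by
  rw [← planeWeyl_swap]
  exact sum_sum_planeWeyl_right_mul hij.symm q p hσ c

/-- The map `σ^{ef} ↦ Ξ^{cd}_{abef} σ^{ef}` on symmetric `σ`, for an arbitrary array `W` in place of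
the Weyl tensor and `κ` in place of `1/n`. -/
def obstructionMap [Fintype ι] (κ : R) (W : ι → ι → ι → ι → R) (a b : ι) (σ : ι → ι → R)
    (c d : ι) : R :=
  ∑ e, W c a b e * σ e d + ∑ e, W d a b e * σ e c
    + κ * (δ c a * ∑ e, ∑ f, W d b e f * σ e f - δ c b * ∑ e, ∑ f, W d a e f * σ e f
      + δ d a * ∑ e, ∑ f, W c b e f * σ e f - δ d b * ∑ e, ∑ f, W c a e f * σ e f)

/-- The diagonal entries of `obstructionMap κ (planeWeyl i j p q) i j`. -/
def planeEigenvalue (κ : R) (i j : ι) (p q : ι → R) (c d : ι) : R :=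
  planeCoeff i j p q c + planeCoeff i j p q d
    + κ * (δ c i * contractionCoeff j p q d - δ c j * contractionCoeff i q p d
      + δ d i * contractionCoeff j p q c - δ d j * contractionCoeff i q p c)

lemma planeEigenvalue_comm (κ : R) (i j : ι) (p q : ι → R) (c d : ι) :
    planeEigenvalue κ i j p q c d = planeEigenvalue κ i j p q d c := by
  simp only [planeEigenvalue]
  ring

theorem obstructionMap_planeWeyl [Fintype ι] (κ : R) {i j : ι} (hij : i ≠ j) (p q : ι → R)
    {σ : ι → ι → R} (hσ : ∀ i j, σ i j = σ j i) (c d : ι) :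
    obstructionMap κ (planeWeyl i j p q) i j σ c d =
      planeEigenvalue κ i j p q c d * σ c d := by
  have hsum : ∀ c d, ∑ e, planeWeyl i j p q c i j e * σ e d = planeCoeff i j p q c * σ c d := by
    intro c d
    simp [planeWeyl_plane hij, Matrix.one_apply]
  simp only [obstructionMap, planeEigenvalue, hsum, sum_sum_planeWeyl_right_mul hij p q hσ,
    sum_sum_planeWeyl_left_mul hij p q hσ, hσ d c]
  linear_combination
    κ * contractionCoeff j p q d * one_apply_mul_congr c i (σ · d)
      - κ * contractionCoeff i q p d * one_apply_mul_congr c j (σ · d)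
      + κ * contractionCoeff j p q c * (one_apply_mul_congr d i (σ · c) + δ d i * hσ d c)
      - κ * contractionCoeff i q p c * (one_apply_mul_congr d j (σ · c) + δ d j * hσ d c)

end PlaneWeyl

section Coefficients

/-- The coefficients `p` of `Wten n`, as functions of `x = n` and the 0-based upper index. -/
def coeffP (x : ℝ) : ℕ → ℝ
  | 0 => 3 * (x ^ 2 - x - 1)
  | 1 => 0
  | 2 => -(x ^ 2 - x - 3)
  | _ => x + 2

/-- The coefficients `q` of `Wten n`, as functions of `x = n` and the 0-based upper index. -/
def coeffQ (x : ℝ) : ℕ → ℝ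
  | 0 => 0
  | 1 => -3
  | 2 => x * (x + 2)
  | _ => 2 * x + 1

/-- `n / (n - 1)` times the diagonal entries of `σ^{ef} ↦ Ξ^{cd}_{12ef} σ^{ef}`, as functions of
`x = n` and the 0-based indices. -/
def eigenFactor (x : ℝ) : ℕ → ℕ → ℝ
  | 0, 0 => 6 * (x ^ 2 - x - 1)
  | 0, 1 | 1, 0 => 3 * x * (x - 1)
  | 0, 2 | 2, 0 => x ^ 2 + 3
  | 0, _ | _, 0 => x * (3 * x - 1)
  | 1, 1 => 6
  | 1, 2 | 2, 1 => -2 * (x ^ 2 - 3)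
  | 1, _ | _, 1 => -(x - 3)
  | 2, 2 => -2 * x * (2 * x + 3)
  | 2, _ | _, 2 => -2 * x * (x + 2)
  | _, _ => -2 * x

lemma eigenFactor_ne_zero {x : ℝ} (hx : 3 ≤ x) {c d : ℕ} (hc : c < x) (hd : d < x) :
    eigenFactor x c d ≠ 0 := by
  -- The entry for `1` and an index `≥ 3` has the factor `x - 3`; such an index forces `3 < x`.
  rcases c with _ | _ | _ | c <;> rcases d with _ | _ | _ | d <;> push_cast at hc hd <;>
    simp only [eigenFactor, zero_add, Nat.reduceAdd] <;> intro h <;> nlinarith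

variable {n : ℕ} {i j : Fin n}

lemma Wten_eq_planeWeyl (hi : i.val = 0) (hj : j.val = 1) :
    Wten n = planeWeyl i j (coeffP n ·) (coeffQ n ·) := by
  ext ⟨c, hc⟩ ⟨a, ha⟩ ⟨b, hb⟩ ⟨d, hd⟩
  simp only [Wten, planeWeyl, skewFirst, planeSymbol, Matrix.one_apply, hi, hj, Fin.ext_iff]
  clear hc ha hb hd hi hj
  rcases c with _ | _ | _ | c <;> rcases a with _ | _ | a <;> rcases b with _ | _ | b <;>
    simp only [coeffP, coeffQ] <;> grind

lemma sum_coeffP (hn : 3 ≤ n) : ∑ c : Fin n, coeffP n c = 3 * ((n : ℝ) ^ 2 - n - 2) := by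
  obtain ⟨m, rfl⟩ := Nat.exists_eq_add_of_le' hn
  simp only [Fin.sum_univ_succ, coeffP, Fin.coe_ofNat_eq_mod, Nat.zero_mod, Fin.val_succ, zero_add,
    Nat.reduceAdd, Finset.sum_const, Finset.card_univ, Fintype.card_fin, nsmul_eq_mul]
  push_cast
  ring

lemma sum_coeffQ (hn : 3 ≤ n) : ∑ c : Fin n, coeffQ n c = 3 * ((n : ℝ) ^ 2 - n - 2) := by
  obtain ⟨m, rfl⟩ := Nat.exists_eq_add_of_le' hn
  simp only [Fin.sum_univ_succ, coeffQ, Fin.coe_ofNat_eq_mod, Nat.zero_mod, Fin.val_succ, zero_add,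
    Nat.reduceAdd, Finset.sum_const, Finset.card_univ, Fintype.card_fin, nsmul_eq_mul]
  push_cast
  ring

lemma Wten_trace (hn : 3 ≤ n) (hi : i.val = 0) (hj : j.val = 1) (b d : Fin n) :
    ∑ a, Wten n a a b d = 0 := by
  rw [Wten_eq_planeWeyl hi hj]
  refine planeWeyl_trace ?_ ?_ b d
  · simp only [sum_coeffP hn]
    simp only [hi, hj, coeffP, coeffQ]
    ring
  · simp only [sum_coeffQ hn]
    simp only [hi, hj, coeffP, coeffQ]
    ring

lemma mul_planeEigenvalue_eq_mul_eigenFactor (hi : i.val = 0) (hj : j.val = 1) (c d : Fin n) :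
    n * planeEigenvalue (1 / (n : ℝ)) i j (coeffP n ·) (coeffQ n ·) c d =
      (n - 1) * eigenFactor n c d := by
  have hn : (n : ℝ) ≠ 0 := by
    exact_mod_cast (Fin.pos c).ne'
  rw [planeEigenvalue, mul_add, ← mul_assoc, mul_one_div_cancel hn, one_mul]
  simp only [planeCoeff, contractionCoeff, Matrix.one_apply, Fin.ext_iff, hi, hj]
  generalize (c : ℕ) = c
  generalize (d : ℕ) = d
  rcases c with _ | _ | _ | c <;> rcases d with _ | _ | _ | d <;>
    simp only [coeffP, coeffQ, eigenFactor] <;> grind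

lemma planeEigenvalue_ne_zero (hn : 3 ≤ n) (hi : i.val = 0) (hj : j.val = 1) (c d : Fin n) :
    planeEigenvalue (1 / (n : ℝ)) i j (coeffP n ·) (coeffQ n ·) c d ≠ 0 := by
  have hx : (3 : ℝ) ≤ n := by exact_mod_cast hn
  have hlt : ∀ c : Fin n, (c : ℝ) < n := fun c => by exact_mod_cast c.is_lt
  refine right_ne_zero_of_mul (a := (n : ℝ)) ?_
  rw [mul_planeEigenvalue_eq_mul_eigenFactor hi hj]
  exact mul_ne_zero (by linarith) (eigenFactor_ne_zero hx (hlt c) (hlt d))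

lemma kron_eq_one_apply (a b : Fin n) : kron n a b = (1 : Matrix (Fin n) (Fin n) ℝ) a b :=
  (Matrix.one_apply ..).symm

lemma sum_sum_WtenSym_mul (d b : Fin n) {σ : Fin n → Fin n → ℝ} (hσ : ∀ i j, σ i j = σ j i) :
    ∑ e, ∑ f, WtenSym n d b e f * σ e f = ∑ e, ∑ f, Wten n d b e f * σ e f := by
  simp only [WtenSym, mul_assoc, add_mul, ← Finset.mul_sum, Finset.sum_add_distrib,
    sum_sum_swap_mul_of_symm (Wten n d b) hσ]
  ring

lemma sum_sum_Xi_mul (a b : Fin n) {σ : Fin n → Fin n → ℝ} (hσ : ∀ i j, σ i j = σ j i)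
    (c d : Fin n) :
    ∑ e, ∑ f, Xi n c d a b e f * σ e f = obstructionMap (1 / (n : ℝ)) (Wten n) a b σ c d := by
  have h : ∀ e f, Xi n c d a b e f * σ e f =
      1 / 2 * (Wten n c a b e * kron n d f * σ e f + Wten n c a b f * kron n d e * σ e f)
      + 1 / 2 * (Wten n d a b e * kron n c f * σ e f + Wten n d a b f * kron n c e * σ e f)
      + 1 / n * (kron n c a * (WtenSym n d b e f * σ e f)
        - kron n c b * (WtenSym n d a e f * σ e f)
        + kron n d a * (WtenSym n c b e f * σ e f)
        - kron n d b * (WtenSym n c a e f * σ e f)) := by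
    intro e f
    simp only [Xi]
    ring
  have hdiag : ∀ (g : Fin n → ℝ) (c : Fin n),
      ∑ e, ∑ f, g e * kron n c f * σ e f = ∑ e, g e * σ e c := by
    intro g c
    simp [kron]
  have hdiag' : ∀ (g : Fin n → ℝ) (c : Fin n),
      ∑ e, ∑ f, g f * kron n c e * σ e f = ∑ e, g e * σ e c := by
    intro g c
    simp [kron, hσ c]
  simp only [h, Finset.sum_add_distrib, Finset.sum_sub_distrib, ← Finset.mul_sum, hdiag, hdiag',
    sum_sum_WtenSym_mul _ _ hσ]
  simp only [obstructionMap, kron_eq_one_apply]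
  ring

theorem sum_sum_Xi_mul_eq_planeEigenvalue_mul (hi : i.val = 0) (hj : j.val = 1)
    {σ : Fin n → Fin n → ℝ} (hσ : ∀ i j, σ i j = σ j i) (c d : Fin n) :
    ∑ e, ∑ f, Xi n c d i j e f * σ e f =
      planeEigenvalue (1 / (n : ℝ)) i j (coeffP n ·) (coeffQ n ·) c d * σ c d := by
  have hij : i ≠ j := by
    rintro rfl
    omega
  rw [sum_sum_Xi_mul i j hσ, Wten_eq_planeWeyl hi hj, obstructionMap_planeWeyl _ hij _ _ hσ]

end Coefficients

/-- **Maximal rank of the higher-dimensional metrisability obstruction.** The explicit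
tensor `W` has the symmetries of a projective Weyl tensor, and the linear map
`σ^{ef} ↦ Ξ^{cd}_{12ef}σ^{ef}` on symmetric 2-tensors is invertible; indeed it is
diagonal with nonzero diagonal entries in the standard basis of symmetric pairs. -/
theorem weyl_obstruction_maximal_rank (n : ℕ) (hn : 3 ≤ n) :
    (∀ c a b d : Fin n, Wten n c a b d = -Wten n c b a d) ∧
    (∀ c a b d : Fin n,
      Wten n c a b d + Wten n c b d a + Wten n c d a b
        - Wten n c b a d - Wten n c a d b - Wten n c d b a = 0) ∧
    (∀ b d : Fin n, (∑ a : Fin n, Wten n a a b d) = 0) ∧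
    (∀ τ : Fin n → Fin n → ℝ, (∀ i j, τ i j = τ j i) →
      ∃! σ : {σ : Fin n → Fin n → ℝ // ∀ i j, σ i j = σ j i},
        ∀ c d : Fin n,
          (∑ e : Fin n, ∑ f : Fin n,
            Xi n c d ⟨0, by omega⟩ ⟨1, by omega⟩ e f * σ.1 e f) = τ c d) ∧
    (∃ lam : Fin n → Fin n → ℝ,
      (∀ c d, lam c d = lam d c) ∧ (∀ c d, lam c d ≠ 0) ∧
      ∀ σ : Fin n → Fin n → ℝ, (∀ i j, σ i j = σ j i) →
        ∀ c d : Fin n,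
          (∑ e : Fin n, ∑ f : Fin n,
            Xi n c d ⟨0, by omega⟩ ⟨1, by omega⟩ e f * σ e f) = lam c d * σ c d) := by
  have hi : (⟨0, by omega⟩ : Fin n).val = 0 := rfl
  have hj : (⟨1, by omega⟩ : Fin n).val = 1 := rfl
  have hW := Wten_eq_planeWeyl hi hj
  have hlam := planeEigenvalue_comm (ι := Fin n) (1 / (n : ℝ)) ⟨0, by omega⟩ ⟨1, by omega⟩
    (coeffP n ·) (coeffQ n ·)
  have hlam₀ := planeEigenvalue_ne_zero hn hi hj
  have hΞ := @sum_sum_Xi_mul_eq_planeEigenvalue_mul n _ _ hi hj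
  refine ⟨?_, ?_, Wten_trace hn hi hj, fun τ hτ => ?_, _, hlam, hlam₀, fun σ => hΞ⟩
  · rw [hW]
    exact fun c => skewFirst_antisymm _
  · rw [hW]
    exact planeWeyl_bianchi _ _ _ _
  · exact existsUnique_symm_of_forall_eq_mul hlam hlam₀ (fun σ => hΞ) hτ
end
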